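/- arXiv:2011.15071 — 2 statements merged into one kernel-verified Lean document; each statement's English description precedes it below -/
import Mathlib

section
/- Let (X, μ) be a finite measure space and u, v ∈ L¹(X, μ) with ∫_X u dμ = ∫_X v dμ. Suppose that for every real t with 0 ≤ t ≤ μ(X), ∫₀ᵗ u*(s) ds ≤ ∫₀ᵗ v*(s) ds, where u*, v* are the decreasing rearrangements of u and v. Then for every convex function φ : ℝ → ℝ such that φ∘u and φ∘v are integrable, ∫_X φ(u) dμ ≤ ∫_X φ(v) dμ. -/
open MeasureTheory Set

noncomputable section

/-- Decreasing rearrangement of `f` with respect to the measure `μ`: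
`f*(s) = inf {c : μ {f > c} ≤ s}`. -/
def decRearr {X : Type*} [MeasurableSpace X] (μ : Measure X) (f : X → ℝ) (s : ℝ) : ℝ :=
  sInf {c : ℝ | μ {x | c < f x} ≤ ENNReal.ofReal s}

/-- A measure is nonatomic if every set of positive measure has a measurable subset of
strictly smaller positive measure. -/
def IsNonatomic {X : Type*} [MeasurableSpace X] (μ : Measure X) : Prop :=
  ∀ s : Set X, MeasurableSet s → μ s ≠ 0 →
    ∃ t, t ⊆ s ∧ MeasurableSet t ∧ 0 < μ t ∧ μ t < μ s


def hk (c x : ℝ) : ℝ := if 0 < c then max (x - c) 0 else max (c - x) 0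

lemma hk_pos (c x : ℝ) (hx : 0 ≤ x) :
    ENNReal.ofReal (hk c x) =
      ∫⁻ t in Ioo 0 x, ({p : ℝ × ℝ | 0 < p.1 ∧ p.1 ≤ p.2}.indicator (fun _ => (1 : ENNReal))) (c, t) := by
  unfold hk
  split_ifs with hc
  · have : ∀ t, ({p : ℝ × ℝ | 0 < p.1 ∧ p.1 ≤ p.2}.indicator (fun _ => (1 : ENNReal))) (c, t)
        = (Ici c).indicator (fun _ => (1 : ENNReal)) t := by
      intro t
      simp [indicator, hc]
    simp_rw [this]
    rw [lintegral_indicator measurableSet_Ici, lintegral_one, Measure.restrict_apply_univ,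
      Measure.restrict_apply measurableSet_Ici]
    have : Ici c ∩ Ioo 0 x = Ico c x := by
      ext t; simp only [mem_inter_iff, mem_Ici, mem_Ioo, mem_Ico]
      constructor
      · rintro ⟨h1, h2, h3⟩; exact ⟨h1, h3⟩
      · rintro ⟨h1, h2⟩; exact ⟨h1, by linarith, h2⟩
    rw [this, Real.volume_Ico]
    rcases le_total (x - c) 0 with h | h
    · rw [max_eq_right h, ENNReal.ofReal_of_nonpos h]; simp
    · rw [max_eq_left h]
  · have : max (c - x) 0 = 0 := max_eq_right (by linarith)
    simp [this, indicator, hc]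

lemma hk_neg (c x : ℝ) (hx : x < 0) :
    ENNReal.ofReal (hk c x) =
      ∫⁻ t in Ioo x 0, ({p : ℝ × ℝ | p.2 < p.1 ∧ p.1 ≤ 0}.indicator (fun _ => (1 : ENNReal))) (c, t) := by
  unfold hk
  split_ifs with hc
  · have : max (x - c) 0 = 0 := max_eq_right (by linarith)
    simp [this, indicator, not_le.mpr hc]
  · push Not at hc
    have : ∀ t, ({p : ℝ × ℝ | p.2 < p.1 ∧ p.1 ≤ 0}.indicator (fun _ => (1 : ENNReal))) (c, t)
        = (Iio c).indicator (fun _ => (1 : ENNReal)) t := by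
      intro t
      simp [indicator, hc]
    simp_rw [this]
    rw [lintegral_indicator measurableSet_Iio, lintegral_one, Measure.restrict_apply_univ,
      Measure.restrict_apply measurableSet_Iio]
    have : Iio c ∩ Ioo x 0 = Ioo x c := by
      ext t; simp only [mem_inter_iff, mem_Iio, mem_Ioo]
      constructor
      · rintro ⟨h1, h2, h3⟩; exact ⟨h2, h1⟩
      · rintro ⟨h1, h2⟩; exact ⟨h2, h1, by linarith⟩
    rw [this, Real.volume_Ioo]
    rcases le_total (c - x) 0 with h | h
    · rw [max_eq_right h, ENNReal.ofReal_of_nonpos h]; simp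
    · rw [max_eq_left h]

lemma hk_lint (ν : Measure ℝ) [SFinite ν] (G : StieltjesFunction ℝ) (hν : ν = G.measure) (x : ℝ) :
    0 ≤ (∫ t in (0 : ℝ)..x, (G t - G 0)) ∧
    ∫⁻ c, ENNReal.ofReal (hk c x) ∂ν = ENNReal.ofReal (∫ t in (0 : ℝ)..x, (G t - G 0)) := by
  have hGi : ∀ a b : ℝ, IntervalIntegrable (fun t => G t - G 0) volume a b := fun a b =>
    (G.mono.intervalIntegrable).sub intervalIntegrable_const
  rcases le_or_gt 0 x with hx | hx
  · have hae : 0 ≤ᵐ[volume.restrict (Ioo 0 x)] fun t => G t - G 0 := by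
      filter_upwards [ae_restrict_mem measurableSet_Ioo] with t ht
      have := G.mono ht.1.le
      simpa using this
    rw [intervalIntegral.integral_of_le hx, integral_Ioc_eq_integral_Ioo]
    refine ⟨integral_nonneg_of_ae hae, ?_⟩
    rw [ofReal_integral_eq_lintegral_ofReal _ hae]
    · simp_rw [hk_pos _ x hx]
      rw [lintegral_lintegral_swap]
      · refine lintegral_congr fun t => ?_
        have : ∀ c, ({p : ℝ × ℝ | 0 < p.1 ∧ p.1 ≤ p.2}.indicator (fun _ => (1 : ENNReal))) (c, t)
            = (Ioc 0 t).indicator (fun _ => (1 : ENNReal)) c := by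
          intro c; simp [indicator]
        simp_rw [this]
        rw [lintegral_indicator measurableSet_Ioc, lintegral_one, Measure.restrict_apply_univ, hν,
          G.measure_Ioc]
      · refine Measurable.aemeasurable ?_
        refine Measurable.indicator measurable_const ?_
        exact (measurableSet_lt measurable_const measurable_fst).inter
          (measurableSet_le measurable_fst measurable_snd)
    · have := ((hGi 0 x).1).mono_set (Ioo_subset_Ioc_self (a := x) (b := 0))
      exact this
  · have hae : 0 ≤ᵐ[volume.restrict (Ioo x 0)] fun t => G 0 - G t := by
      filter_upwards [ae_restrict_mem measurableSet_Ioo] with t ht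
      have := G.mono ht.2.le
      simpa using this
    rw [intervalIntegral.integral_of_ge hx.le, integral_Ioc_eq_integral_Ioo, ← integral_neg]
    simp_rw [neg_sub]
    refine ⟨integral_nonneg_of_ae hae, ?_⟩
    rw [ofReal_integral_eq_lintegral_ofReal _ hae]
    · simp_rw [hk_neg _ x hx]
      rw [lintegral_lintegral_swap]
      · refine lintegral_congr fun t => ?_
        have : ∀ c, ({p : ℝ × ℝ | p.2 < p.1 ∧ p.1 ≤ 0}.indicator (fun _ => (1 : ENNReal))) (c, t)
            = (Ioc t 0).indicator (fun _ => (1 : ENNReal)) c := by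
          intro c; simp [indicator]
        simp_rw [this]
        rw [lintegral_indicator measurableSet_Ioc, lintegral_one, Measure.restrict_apply_univ, hν,
          G.measure_Ioc]
      · refine Measurable.aemeasurable ?_
        refine Measurable.indicator measurable_const ?_
        exact (measurableSet_lt measurable_snd measurable_fst).inter
          (measurableSet_le measurable_fst measurable_const)
    · have := ((hGi x 0).1).mono_set (Ioo_subset_Ioc_self (a := 0) (b := x))
      simp_rw [← neg_sub (G _) (G 0)]
      exact this.neg

lemma convex_rep (φ : ℝ → ℝ) (hφ : ConvexOn ℝ univ φ) :
    ∃ (a b : ℝ) (ν : Measure ℝ), SFinite ν ∧ ∀ x, 0 ≤ φ x - (a + b * x) ∧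
      ∫⁻ c, ENNReal.ofReal (hk c x) ∂ν = ENNReal.ofReal (φ x - (a + b * x)) := by
  have hmono : Monotone (fun x => derivWithin φ (Ioi x) x) := by
    have := hφ.monotoneOn_rightDeriv
    rwa [interior_univ, monotoneOn_univ] at this
  set g := fun x => derivWithin φ (Ioi x) x with hg
  set G := hmono.stieltjesFunction with hG
  have key : ∀ x, (∫ t in (0 : ℝ)..x, (G t - G 0)) = φ x - (φ 0 + G 0 * x) := by
    intro x
    have h1 : (∫ t in (0 : ℝ)..x, g t) = φ x - φ 0 := by
      apply intervalIntegral.integral_eq_sub_of_hasDeriv_right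
      · exact (hφ.continuousOn isOpen_univ).mono (subset_univ _)
      · intro y _
        exact hφ.hasDerivWithinAt_rightDeriv_of_mem_interior (by simp)
      · exact hmono.intervalIntegrable
    have h2 : (∫ t in (0 : ℝ)..x, G t) = ∫ t in (0 : ℝ)..x, g t := by
      apply intervalIntegral.integral_congr_ae
      filter_upwards [hmono.countable_not_continuousAt.ae_notMem volume] with t ht _
      rw [hG, hmono.stieltjesFunction_eq]
      simp only [not_not] at ht
      exact ht.continuousWithinAt.rightLim_eq
    rw [intervalIntegral.integral_sub G.mono.intervalIntegrable intervalIntegrable_const, h2, h1]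
    simp; ring
  refine ⟨φ 0, G 0, G.measure, inferInstance, fun x => ?_⟩
  have := hk_lint G.measure G rfl x
  rwa [key x] at this

section
variable {X : Type*} [MeasurableSpace X] (μ : Measure X) [IsFiniteMeasure μ] (f : X → ℝ)

lemma dr_nonempty (hf : AEMeasurable f μ) (s : ℝ) (hs : 0 < s) :
    {c : ℝ | μ {x | c < f x} ≤ ENNReal.ofReal s}.Nonempty := by
  have h := tendsto_measure_iInter_atTop (μ := μ) (s := fun n : ℕ => {x | (n : ℝ) < f x})
    (fun n => nullMeasurableSet_lt aemeasurable_const hf)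
    (fun m n hmn x (hx : (n : ℝ) < f x) => lt_of_le_of_lt (by exact_mod_cast hmn) hx)
    ⟨0, measure_ne_top _ _⟩
  have he : (⋂ n : ℕ, {x | (n : ℝ) < f x}) = ∅ := by
    ext x
    simp only [mem_iInter, mem_ofPred_eq, mem_empty_iff_false, iff_false, not_forall, not_lt]
    exact exists_nat_ge (f x)
  rw [he, measure_empty] at h
  have := h.eventually (gt_mem_nhds (ENNReal.ofReal_pos.mpr hs))
  obtain ⟨n, hn⟩ := this.exists
  exact ⟨n, hn.le⟩

lemma dr_bdd (s : ℝ) (hs : ENNReal.ofReal s < μ univ) :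
    BddBelow {c : ℝ | μ {x | c < f x} ≤ ENNReal.ofReal s} := by
  have hm : Monotone (fun n : ℕ => {x | -(n : ℝ) < f x}) := by
    intro m n hmn x (hx : -(m : ℝ) < f x)
    have : (m : ℝ) ≤ n := by exact_mod_cast hmn
    show -(n : ℝ) < f x
    linarith
  have he : (⋃ n : ℕ, {x | -(n : ℝ) < f x}) = univ := by
    ext x
    simp only [mem_iUnion, mem_ofPred_eq, mem_univ, iff_true]
    obtain ⟨n, hn⟩ := exists_nat_gt (-f x)
    exact ⟨n, by linarith⟩
  have h := hm.measure_iUnion (μ := μ)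
  rw [he] at h
  rw [h] at hs
  obtain ⟨n, hn⟩ := lt_iSup_iff.mp hs
  refine ⟨-n, fun a ha => ?_⟩
  by_contra hlt
  push Not at hlt
  have : μ {x | -(n : ℝ) < f x} ≤ μ {x | a < f x} := measure_mono fun x hx => hlt.trans hx
  exact absurd (this.trans ha) (not_le.mpr hn)

lemma dr_le_iff (hf : AEMeasurable f μ) (s : ℝ) (hs : 0 < s) (hs' : ENNReal.ofReal s < μ univ)
    (c : ℝ) : decRearr μ f s ≤ c ↔ μ {x | c < f x} ≤ ENNReal.ofReal s := by
  constructor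
  · intro h
    have hm : Monotone (fun n : ℕ => {x | c + 1 / ((n : ℝ) + 1) < f x}) := by
      intro m n hmn x (hx : _ < f x)
      show _ < f x
      have := Nat.one_div_le_one_div (α := ℝ) hmn
      linarith
    have he : (⋃ n : ℕ, {x | c + 1 / ((n : ℝ) + 1) < f x}) = {x | c < f x} := by
      ext x
      simp only [mem_iUnion, mem_ofPred_eq]
      constructor
      · rintro ⟨n, hn⟩
        have : 0 < 1 / ((n : ℝ) + 1) := Nat.one_div_pos_of_nat
        linarith
      · intro hx
        obtain ⟨n, hn⟩ := exists_nat_one_div_lt (sub_pos.mpr hx)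
        exact ⟨n, by linarith⟩
    rw [← he, hm.measure_iUnion]
    refine iSup_le fun n => ?_
    have hpos : 0 < 1 / ((n : ℝ) + 1) := Nat.one_div_pos_of_nat
    obtain ⟨a, ha, hac⟩ := exists_lt_of_csInf_lt (dr_nonempty μ f hf s hs)
      (show decRearr μ f s < c + 1 / ((n : ℝ) + 1) by linarith)
    exact le_trans (measure_mono fun x hx => hac.trans hx) ha
  · intro h
    exact csInf_le (dr_bdd μ f s hs') h

lemma dr_le_iff' (hf : AEMeasurable f μ) {s : ℝ} (hs : s ∈ Ioo 0 (μ univ).toReal)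
    (c : ℝ) : decRearr μ f s ≤ c ↔ (μ {x | c < f x}).toReal ≤ s := by
  rw [dr_le_iff μ f hf s hs.1 ((ENNReal.ofReal_lt_iff_lt_toReal hs.1.le (measure_ne_top _ _)).mpr hs.2),
    ENNReal.le_ofReal_iff_toReal_le (measure_ne_top _ _) hs.1.le]

lemma dr_aem (hf : AEMeasurable f μ) :
    AEMeasurable (decRearr μ f) (volume.restrict (Ioo 0 (μ univ).toReal)) := by
  apply aemeasurable_restrict_of_antitoneOn measurableSet_Ioo
  intro s hs t ht hst
  rw [dr_le_iff' μ f hf ht]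
  exact ((dr_le_iff' μ f hf hs _).mp le_rfl).trans hst

lemma dr_map (hf : AEMeasurable f μ) :
    (volume.restrict (Ioo 0 (μ univ).toReal)).map (decRearr μ f) = μ.map f := by
  have : IsFiniteMeasure ((volume.restrict (Ioo 0 (μ univ).toReal)).map (decRearr μ f)) :=
    Measure.isFiniteMeasure_map _ _
  apply Measure.ext_of_Iic
  intro c
  rw [Measure.map_apply_of_aemeasurable (dr_aem μ f hf) measurableSet_Iic,
    Measure.map_apply_of_aemeasurable hf measurableSet_Iic,
    Measure.restrict_apply' measurableSet_Ioo]
  have h1 : decRearr μ f ⁻¹' Iic c ∩ Ioo 0 (μ univ).toReal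
      = Ici (μ {x | c < f x}).toReal ∩ Ioo 0 (μ univ).toReal := by
    ext s
    simp only [mem_inter_iff, mem_preimage, mem_Iic, mem_Ici]
    constructor
    · rintro ⟨h, hs⟩; exact ⟨(dr_le_iff' μ f hf hs c).mp h, hs⟩
    · rintro ⟨h, hs⟩; exact ⟨(dr_le_iff' μ f hf hs c).mpr h, hs⟩
  have h2 : f ⁻¹' Iic c = {x | c < f x}ᶜ := by ext x; simp
  rw [h1, h2, measure_compl₀ (nullMeasurableSet_lt aemeasurable_const hf) (measure_ne_top _ _)]
  have h3 : μ univ - μ {x | c < f x} = ENNReal.ofReal ((μ univ).toReal - (μ {x | c < f x}).toReal) := by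
    rw [ENNReal.ofReal_sub _ ENNReal.toReal_nonneg, ENNReal.ofReal_toReal (measure_ne_top _ _),
      ENNReal.ofReal_toReal (measure_ne_top _ _)]
  rw [h3]
  apply le_antisymm
  · rw [← Real.volume_Icc]
    exact measure_mono fun s hs => ⟨hs.1, hs.2.2.le⟩
  · rw [← Real.volume_Ioo]
    exact measure_mono fun s hs => ⟨hs.1.le, lt_of_le_of_lt ENNReal.toReal_nonneg hs.1, hs.2⟩

lemma dr_integrable (hf : Integrable f μ) :
    IntegrableOn (decRearr μ f) (Ioo 0 (μ univ).toReal) := by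
  have h : Integrable id (μ.map f) :=
    (integrable_map_measure measurable_id.aestronglyMeasurable hf.aemeasurable).mpr hf
  rw [← dr_map μ f hf.aemeasurable] at h
  exact (integrable_map_measure measurable_id.aestronglyMeasurable (dr_aem μ f hf.aemeasurable)).mp h

lemma dr_hinge (hf : AEMeasurable f μ) (c : ℝ) :
    ∫ x, max (f x - c) 0 ∂μ = ∫ s in Ioo 0 (μ univ).toReal, max (decRearr μ f s - c) 0 := by
  have hm : Measurable fun y : ℝ => max (y - c) 0 := by fun_prop
  have h1 := integral_map (φ := f) hf (f := fun y : ℝ => max (y - c) 0) hm.aestronglyMeasurable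
  have h2 := integral_map (dr_aem μ f hf) (f := fun y : ℝ => max (y - c) 0) hm.aestronglyMeasurable
  rw [← h1, ← dr_map μ f hf, h2]
end

lemma hinge_le {X : Type*} [MeasurableSpace X] (μ : Measure X)
    [IsFiniteMeasure μ] (u v : X → ℝ) (hu : Integrable u μ) (hv : Integrable v μ)
    (hstar : ∀ t : ℝ, 0 ≤ t → t ≤ (μ univ).toReal →
      (∫ s in (0 : ℝ)..t, decRearr μ u s) ≤ ∫ s in (0 : ℝ)..t, decRearr μ v s) (c : ℝ) :
    ∫ x, max (u x - c) 0 ∂μ ≤ ∫ x, max (v x - c) 0 ∂μ := by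
  rw [dr_hinge μ u hu.aemeasurable, dr_hinge μ v hv.aemeasurable]
  set M := (μ univ).toReal with hM
  set t := (μ {x | c < u x}).toReal with ht
  have ht0 : 0 ≤ t := ENNReal.toReal_nonneg
  have htM : t ≤ M := ENNReal.toReal_mono (measure_ne_top _ _) (measure_mono (subset_univ _))
  have hs := hstar t ht0 htM
  rw [intervalIntegral.integral_of_le ht0, intervalIntegral.integral_of_le ht0,
    integral_Ioc_eq_integral_Ioo, integral_Ioc_eq_integral_Ioo] at hs
  have hsub : Ioo 0 t ⊆ Ioo 0 M := Ioo_subset_Ioo_right htM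
  have iu := dr_integrable μ u hu
  have iv := dr_integrable μ v hv
  have icM : IntegrableOn (fun _ : ℝ => c) (Ioo 0 M) := integrable_const c
  have ic : IntegrableOn (fun _ : ℝ => c) (Ioo 0 t) := integrable_const c
  have e1 : ∫ s in Ioo 0 M, max (decRearr μ u s - c) 0 = ∫ s in Ioo 0 t, (decRearr μ u s - c) := by
    rw [← integral_indicator measurableSet_Ioo, ← integral_indicator measurableSet_Ioo]
    refine integral_congr_ae ?_
    have : ∀ᵐ s : ℝ, s ≠ t := by simp [ae_iff]
    filter_upwards [this] with s hst
    by_cases h1 : s ∈ Ioo 0 M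
    · by_cases h2 : s ∈ Ioo 0 t
      · rw [indicator_of_mem h1, indicator_of_mem h2]
        have : ¬ decRearr μ u s ≤ c := by
          rw [dr_le_iff' μ u hu.aemeasurable h1]; exact not_le.mpr h2.2
        exact max_eq_left (by linarith)
      · rw [indicator_of_mem h1, indicator_of_notMem h2]
        have : decRearr μ u s ≤ c := by
          rw [dr_le_iff' μ u hu.aemeasurable h1]
          by_contra h; exact h2 ⟨h1.1, not_le.mp h⟩
        exact max_eq_right (by linarith)
    · rw [indicator_of_notMem h1, indicator_of_notMem fun h => h1 (hsub h)]
  rw [e1]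
  have iv' : IntegrableOn (fun s => max (decRearr μ v s - c) 0) (Ioo 0 M) :=
    (iv.sub icM).pos_part
  calc ∫ s in Ioo 0 t, (decRearr μ u s - c)
      ≤ ∫ s in Ioo 0 t, (decRearr μ v s - c) := by
        rw [integral_sub (iu.mono_set hsub) ic, integral_sub (iv.mono_set hsub) ic]
        linarith
    _ ≤ ∫ s in Ioo 0 t, max (decRearr μ v s - c) 0 :=
        integral_mono ((iv.mono_set hsub).sub ic) (iv'.mono_set hsub) fun s => le_max_left _ _
    _ ≤ ∫ s in Ioo 0 M, max (decRearr μ v s - c) 0 :=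
        setIntegral_mono_set iv' (Filter.Eventually.of_forall fun s => le_max_right _ _)
          (Filter.Eventually.of_forall hsub)

lemma hk_le {X : Type*} [MeasurableSpace X] (μ : Measure X)
    [IsFiniteMeasure μ] (u v : X → ℝ) (hu : Integrable u μ) (hv : Integrable v μ)
    (hmean : (∫ x, u x ∂μ) = ∫ x, v x ∂μ)
    (h : ∀ c : ℝ, ∫ x, max (u x - c) 0 ∂μ ≤ ∫ x, max (v x - c) 0 ∂μ) (c : ℝ) :
    ∫⁻ x, ENNReal.ofReal (hk c (u x)) ∂μ ≤ ∫⁻ x, ENNReal.ofReal (hk c (v x)) ∂μ := by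
  have ic : Integrable (fun _ : X => c) μ := integrable_const c
  have iu : Integrable (fun x => max (u x - c) 0) μ := (hu.sub ic).pos_part
  have iv : Integrable (fun x => max (v x - c) 0) μ := (hv.sub ic).pos_part
  have iu' : Integrable (fun x => max (c - u x) 0) μ := (ic.sub hu).pos_part
  have iv' : Integrable (fun x => max (c - v x) 0) μ := (ic.sub hv).pos_part
  have hc := h c
  unfold hk
  split_ifs with h0
  · rw [← ofReal_integral_eq_lintegral_ofReal iu (Filter.Eventually.of_forall fun x => le_max_right _ _),
      ← ofReal_integral_eq_lintegral_ofReal iv (Filter.Eventually.of_forall fun x => le_max_right _ _)]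
    exact ENNReal.ofReal_le_ofReal hc
  · rw [← ofReal_integral_eq_lintegral_ofReal iu' (Filter.Eventually.of_forall fun x => le_max_right _ _),
      ← ofReal_integral_eq_lintegral_ofReal iv' (Filter.Eventually.of_forall fun x => le_max_right _ _)]
    apply ENNReal.ofReal_le_ofReal
    have key : ∀ y : ℝ, max (c - y) 0 = max (y - c) 0 - (y - c) := by
      intro y
      rcases le_total y c with hy | hy
      · rw [max_eq_left (by linarith), max_eq_right (by linarith)]; ring
      · rw [max_eq_right (by linarith), max_eq_left (by linarith)]; ring
    simp_rw [key]
    have ku : Integrable (fun x => u x - c) μ := hu.sub ic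
    have kv : Integrable (fun x => v x - c) μ := hv.sub ic
    rw [integral_sub iu ku, integral_sub iv kv, integral_sub hu ic,
      integral_sub hv ic]
    linarith

lemma hk_measurable : Measurable fun p : ℝ × ℝ => hk p.1 p.2 := by
  unfold hk
  refine Measurable.ite (measurableSet_lt measurable_const measurable_fst) ?_ ?_ <;> fun_prop

lemma hk_swap {X : Type*} [MeasurableSpace X] (μ : Measure X)
    [IsFiniteMeasure μ] (u : X → ℝ) (hu : AEMeasurable u μ) (ν : Measure ℝ) [SFinite ν] :
    ∫⁻ x, ∫⁻ c, ENNReal.ofReal (hk c (u x)) ∂ν ∂μ = ∫⁻ c, ∫⁻ x, ENNReal.ofReal (hk c (u x)) ∂μ ∂ν := by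
  apply lintegral_lintegral_swap
  have h1 : AEMeasurable (fun p : X × ℝ => u p.1) (μ.prod ν) :=
    hu.comp_quasiMeasurePreserving Measure.quasiMeasurePreserving_fst
  exact (ENNReal.measurable_ofReal.comp hk_measurable).comp_aemeasurable
    (measurable_snd.aemeasurable.prodMk h1)

/-- **Majorization with equal means**: if additionally `∫ u = ∫ v`, the convex means of `u`
are dominated by those of `v` for all convex `φ`. -/
theorem majorization_convex {X : Type*} [MeasurableSpace X] (μ : Measure X)
    [IsFiniteMeasure μ] (u v : X → ℝ) (hu : Integrable u μ) (hv : Integrable v μ)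
    (hmean : (∫ x, u x ∂μ) = ∫ x, v x ∂μ)
    (hstar : ∀ t : ℝ, 0 ≤ t → t ≤ (μ univ).toReal →
      (∫ s in (0 : ℝ)..t, decRearr μ u s) ≤ ∫ s in (0 : ℝ)..t, decRearr μ v s) :
    ∀ φ : ℝ → ℝ, ConvexOn ℝ univ φ →
      Integrable (fun x => φ (u x)) μ → Integrable (fun x => φ (v x)) μ →
      (∫ x, φ (u x) ∂μ) ≤ ∫ x, φ (v x) ∂μ := by
  intro φ hφ iu iv
  obtain ⟨a, b, ν, hν, hrep⟩ := convex_rep φ hφ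
  have hle := hk_le μ u v hu hv hmean (hinge_le μ u v hu hv hstar)
  have hint : ∫⁻ x, ∫⁻ c, ENNReal.ofReal (hk c (u x)) ∂ν ∂μ
      ≤ ∫⁻ x, ∫⁻ c, ENNReal.ofReal (hk c (v x)) ∂ν ∂μ := by
    rw [hk_swap μ u hu.aemeasurable, hk_swap μ v hv.aemeasurable]
    exact lintegral_mono hle
  simp_rw [fun x => (hrep x).2] at hint
  have ia : Integrable (fun _ : X => a) μ := integrable_const a
  have ju : Integrable (fun x => φ (u x) - (a + b * u x)) μ := iu.sub (ia.add (hu.const_mul b))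
  have jv : Integrable (fun x => φ (v x) - (a + b * v x)) μ := iv.sub (ia.add (hv.const_mul b))
  rw [← ofReal_integral_eq_lintegral_ofReal ju (Filter.Eventually.of_forall fun x => (hrep _).1),
    ← ofReal_integral_eq_lintegral_ofReal jv (Filter.Eventually.of_forall fun x => (hrep _).1),
    ENNReal.ofReal_le_ofReal_iff (integral_nonneg fun x => (hrep _).1)] at hint
  have ku : Integrable (fun x => a + b * u x) μ := ia.add (hu.const_mul b)
  have kv : Integrable (fun x => a + b * v x) μ := ia.add (hv.const_mul b)
  rw [integral_sub iu ku, integral_sub iv kv,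
    integral_add ia (hu.const_mul b), integral_add ia (hv.const_mul b),
    integral_const_mul, integral_const_mul, hmean] at hint
  linarith
end
end

section
/- Let n ≥ 2, let D ⊆ ℝ^{n−1} be a bounded open set, ℓ > 0, and Ω = D × (0,ℓ). Suppose u is C² on Ω̄ with u_y(x,0) = u_y(x,ℓ) = 0 for every x ∈ D, and let f = −Δu (a continuous function on Ω̄). Define u^★(x,y) = sup{∫_E u(x,t) dt : E ⊆ (0,ℓ) Lebesgue measurable with |E| = y} and f^★(x,y) = sup{∫_E f(x,t) dt : E ⊆ (0,ℓ) Lebesgue measurable with |E| = y}. Then for every nonnegative C² function G : ℝⁿ → ℝ with compact support contained in Ω, −∫_Ω u^★(x,y) ΔG(x,y) dx dy ≤ ∫_Ω f^★(x,y) G(x,y) dx dy. -/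
open MeasureTheory Set Bornology

noncomputable section

/-- Points of the cylinder `D × (0,ℓ)` are pairs `(x, y)` with `x ∈ ℝ^m`, `y ∈ ℝ`. -/
abbrev Cyl (m : ℕ) := EuclideanSpace ℝ (Fin m) × ℝ

/-- The Laplacian on the cylinder: sum of all second partial derivatives. -/
def cylLap {m : ℕ} (u : Cyl m → ℝ) (p : Cyl m) : ℝ :=
  (∑ i : Fin m, fderiv ℝ (fun q => fderiv ℝ u q (EuclideanSpace.single i 1, 0)) p
      (EuclideanSpace.single i 1, 0)) +
    fderiv ℝ (fun q => fderiv ℝ u q ((0 : EuclideanSpace ℝ (Fin m)), (1 : ℝ))) p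
      ((0 : EuclideanSpace ℝ (Fin m)), (1 : ℝ))

/-- The Laplacian on `ℝ^m`: sum of second partial derivatives. -/
def lapD {m : ℕ} (ψ : EuclideanSpace ℝ (Fin m) → ℝ) (x : EuclideanSpace ℝ (Fin m)) : ℝ :=
  ∑ i : Fin m, fderiv ℝ (fun y => fderiv ℝ ψ y (EuclideanSpace.single i 1)) x
    (EuclideanSpace.single i 1)

/-- `u` is C² on an open neighborhood of the closure of `A`. -/
def IsC2OnClosure {Y : Type*} [NormedAddCommGroup Y] [NormedSpace ℝ Y]
    (u : Y → ℝ) (A : Set Y) : Prop :=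
  ∃ U, IsOpen U ∧ closure A ⊆ U ∧ ContDiffOn ℝ 2 u U

/-- The star function in the `y`-direction:
`u^★(x,y) = sup {∫_E u(x,t) dt : E ⊆ (0,ℓ) measurable, |E| = y}`. -/
def starFun {m : ℕ} (ℓ : ℝ) (u : Cyl m → ℝ) (p : Cyl m) : ℝ :=
  sSup {I : ℝ | ∃ E : Set ℝ, E ⊆ Ioo 0 ℓ ∧ MeasurableSet E ∧
    volume E = ENNReal.ofReal p.2 ∧ I = ∫ t in E, u (p.1, t)}


/-- One-dimensional star function. -/
def star1 (ℓ : ℝ) (v : ℝ → ℝ) (y : ℝ) : ℝ :=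
  sSup {I : ℝ | ∃ E : Set ℝ, E ⊆ Ioo 0 ℓ ∧ MeasurableSet E ∧
    volume E = ENNReal.ofReal y ∧ I = ∫ t in E, v t}

/-- `E` is a superlevel-type set of measure `y` at level `s`. -/
structure TopSet (ℓ : ℝ) (v : ℝ → ℝ) (y s : ℝ) (E : Set ℝ) : Prop where
  sub : E ⊆ Ioo 0 ℓ
  meas : MeasurableSet E
  vol : volume E = ENNReal.ofReal y
  ge : ∀ t ∈ E, s ≤ v t
  le : ∀ t ∈ Ioo 0 ℓ, t ∉ E → v t ≤ s

lemma integrableOn_sub {ℓ : ℝ} {v : ℝ → ℝ} (hv : ContinuousOn v (Icc 0 ℓ)) {A : Set ℝ}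
    (hA : A ⊆ Ioo 0 ℓ) : IntegrableOn v A :=
  (hv.integrableOn_Icc).mono_set (hA.trans Ioo_subset_Icc_self)

lemma vol_ne_top {ℓ : ℝ} {A : Set ℝ} (hA : A ⊆ Ioo 0 ℓ) : volume A ≠ ⊤ :=
  measure_ne_top_of_subset hA (by simp)

lemma TopSet.int_le {ℓ : ℝ} {v : ℝ → ℝ} {y s : ℝ} {E : Set ℝ} (hE : TopSet ℓ v y s E)
    (hv : ContinuousOn v (Icc 0 ℓ)) (hy : 0 ≤ y) {y' : ℝ} (hy' : 0 ≤ y') {A : Set ℝ}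
    (hA : A ⊆ Ioo 0 ℓ) (hAm : MeasurableSet A) (hAv : volume A = ENNReal.ofReal y') :
    ∫ t in A, v t ≤ (∫ t in E, v t) + s * (y' - y) := by
  have key : ∀ (B : Set ℝ) (z : ℝ), B ⊆ Ioo 0 ℓ → MeasurableSet B → 0 ≤ z →
      volume B = ENNReal.ofReal z →
      ∫ t in Ioo 0 ℓ, B.indicator (fun t => v t - s) t = (∫ t in B, v t) - s * z := by
    intro B z hB hBm hz hBv
    rw [integral_indicator hBm, Measure.restrict_restrict hBm, inter_eq_left.2 hB,
      integral_sub (integrableOn_sub hv hB)]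
    · simp [Measure.real, hBv, hz, mul_comm]
    · exact integrableOn_const (vol_ne_top hB)
  have hi : ∀ (B : Set ℝ), B ⊆ Ioo 0 ℓ → MeasurableSet B →
      IntegrableOn (B.indicator (fun t => v t - s)) (Ioo 0 ℓ) := by
    intro B hB hBm
    apply IntegrableOn.indicator _ hBm
    exact (integrableOn_sub hv subset_rfl).sub (integrableOn_const (by simp))
  have h := setIntegral_mono_on (hi A hA hAm) (hi E hE.sub hE.meas) measurableSet_Ioo
    (fun t ht => by
      by_cases h1 : t ∈ A <;> by_cases h2 : t ∈ E <;> simp [h1, h2]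
      · linarith [hE.le t ht h2]
      · linarith [hE.ge t h2])
  rw [key A y' hA hAm hy' hAv, key E y hE.sub hE.meas hy hE.vol] at h
  linarith

lemma star1_le {ℓ : ℝ} {v : ℝ → ℝ} {y c : ℝ} (hne : ∃ E ⊆ Ioo 0 ℓ, MeasurableSet E ∧
    volume E = ENNReal.ofReal y)
    (h : ∀ E ⊆ Ioo 0 ℓ, MeasurableSet E → volume E = ENNReal.ofReal y → ∫ t in E, v t ≤ c) :
    star1 ℓ v y ≤ c := by
  apply csSup_le
  · obtain ⟨E, h1, h2, h3⟩ := hne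
    exact ⟨_, E, h1, h2, h3, rfl⟩
  · rintro _ ⟨E, h1, h2, h3, rfl⟩
    exact h E h1 h2 h3

lemma TopSet.star_eq {ℓ : ℝ} {v : ℝ → ℝ} {y s : ℝ} {E : Set ℝ} (hE : TopSet ℓ v y s E)
    (hv : ContinuousOn v (Icc 0 ℓ)) (hy : 0 ≤ y) : star1 ℓ v y = ∫ t in E, v t := by
  have hb : ∀ A ⊆ Ioo 0 ℓ, MeasurableSet A → volume A = ENNReal.ofReal y →
      ∫ t in A, v t ≤ ∫ t in E, v t := by
    intro A h1 h2 h3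
    simpa using hE.int_le hv hy hy h1 h2 h3
  apply le_antisymm
  · exact star1_le ⟨E, hE.sub, hE.meas, hE.vol⟩ hb
  · apply le_csSup
    · refine ⟨∫ t in E, v t, ?_⟩
      rintro _ ⟨A, h1, h2, h3, rfl⟩
      exact hb A h1 h2 h3
    · exact ⟨E, hE.sub, hE.meas, hE.vol, rfl⟩

lemma TopSet.star_le {ℓ : ℝ} {v : ℝ → ℝ} {y s : ℝ} {E : Set ℝ} (hE : TopSet ℓ v y s E)
    (hv : ContinuousOn v (Icc 0 ℓ)) (hy : 0 ≤ y) {y' : ℝ} (hy' : 0 ≤ y') {s' : ℝ} {E' : Set ℝ}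
    (hE' : TopSet ℓ v y' s' E') : star1 ℓ v y' ≤ star1 ℓ v y + s * (y' - y) := by
  rw [hE.star_eq hv hy, hE'.star_eq hv hy']
  exact hE.int_le hv hy hy' hE'.sub hE'.meas hE'.vol

lemma exists_topSet {ℓ : ℝ} {v : ℝ → ℝ} (hv : ContinuousOn v (Icc 0 ℓ)) {y : ℝ}
    (hy : y ∈ Ioo 0 ℓ) : ∃ s E, TopSet ℓ v y s E := by
  have hv' := hv.mono Ioo_subset_Icc_self
  have hℓ : 0 < ℓ := hy.1.trans hy.2
  obtain ⟨M, hM⟩ := isCompact_Icc.exists_bound_of_continuousOn hv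
  have hM' : ∀ t ∈ Ioo 0 ℓ, |v t| ≤ M := fun t ht => hM t (Ioo_subset_Icc_self ht)
  set P : ℝ → Set ℝ := fun s => Ioo 0 ℓ ∩ v ⁻¹' (Ioi s) with hP
  have hPm : ∀ s, MeasurableSet (P s) := fun s =>
    (hv'.isOpen_inter_preimage isOpen_Ioo isOpen_Ioi).measurableSet
  have hPs : ∀ s, P s ⊆ Ioo 0 ℓ := fun s => inter_subset_left
  have hPanti : Antitone P := fun a b hab t ht => ⟨ht.1, lt_of_le_of_lt hab ht.2⟩
  set S : Set ℝ := {s | volume (P s) ≤ ENNReal.ofReal y} with hS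
  have hSne : M ∈ S := by
    have : P M = ∅ := by
      ext t; simp only [hP, mem_inter_iff, mem_preimage, mem_Ioi, mem_empty_iff_false, iff_false]
      rintro ⟨h1, h2⟩
      linarith [(abs_le.1 (hM' t h1)).2]
    simp [hS, this]
  have hSb : ∀ s ∈ S, -M ≤ s := by
    intro s hs
    by_contra hc
    push Not at hc
    have : P s = Ioo 0 ℓ := by
      apply Subset.antisymm (hPs s)
      intro t ht
      exact ⟨ht, by have := (abs_le.1 (hM' t ht)).1; simp; linarith⟩
    simp only [hS, mem_ofPred_eq, this, Real.volume_Ioo] at hs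
    rw [ENNReal.ofReal_le_ofReal_iff hy.1.le] at hs
    linarith [hy.2]
  have hbdd : BddBelow S := ⟨-M, hSb⟩
  set s := sInf S with hs
  have hgt : ∀ r, s < r → volume (P r) ≤ ENNReal.ofReal y := by
    intro r hr
    obtain ⟨q, hq, hqr⟩ := exists_lt_of_csInf_lt ⟨M, hSne⟩ hr
    exact (measure_mono (hPanti hqr.le)).trans hq
  have hlt : ∀ r, r < s → ENNReal.ofReal y ≤ volume (P r) := by
    intro r hr
    have := notMem_of_lt_csInf hr hbdd
    simp only [hS, mem_ofPred_eq, not_le] at this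
    exact this.le
  obtain ⟨r, hr1, hr2, hr3⟩ := exists_seq_strictAnti_tendsto s
  obtain ⟨q, hq1, hq2, hq3⟩ := exists_seq_strictMono_tendsto s
  have h1 : volume (P s) ≤ ENNReal.ofReal y := by
    have : P s = ⋃ n, P (r n) := by
      ext t
      simp only [hP, mem_inter_iff, mem_preimage, mem_Ioi, mem_iUnion]
      constructor
      · rintro ⟨ha, hb⟩
        obtain ⟨n, hn⟩ := (hr3.eventually (gt_mem_nhds hb)).exists
        exact ⟨n, ha, hn⟩
      · rintro ⟨n, ha, hb⟩
        exact ⟨ha, (hr2 n).trans hb⟩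
    rw [this]
    have hmono : Monotone fun n => P (r n) := fun a b hab => hPanti (hr1.antitone hab)
    exact le_of_tendsto' (tendsto_measure_iUnion_atTop hmono) (fun n => hgt _ (hr2 n))
  set Q : Set ℝ := ⋂ n, P (q n) with hQ
  have hQm : MeasurableSet Q := MeasurableSet.iInter fun n => hPm _
  have hQs : Q ⊆ Ioo 0 ℓ := (iInter_subset _ 0).trans (hPs _)
  have hQge : ∀ t ∈ Q, s ≤ v t := by
    intro t ht
    apply le_of_tendsto' hq3
    intro n
    exact (mem_iInter.1 ht n).2.le
  have hPQ : P s ⊆ Q := subset_iInter fun n => hPanti (hq2 n).le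
  have h2 : ENNReal.ofReal y ≤ volume Q := by
    have hanti : Antitone fun n => P (q n) := fun a b hab => hPanti (hq1.monotone hab)
    exact ge_of_tendsto' (tendsto_measure_iInter_atTop (fun n => (hPm _).nullMeasurableSet) hanti
      ⟨0, vol_ne_top (hPs _)⟩) (fun n => hlt _ (hq2 n))
  -- intermediate value
  set g : ℝ → ℝ := fun c => ∫ t in (0:ℝ)..c, (Q \ P s).indicator (fun _ => (1:ℝ)) t with hg
  have hRm : MeasurableSet (Q \ P s) := hQm.diff (hPm s)
  have hRs : Q \ P s ⊆ Ioo 0 ℓ := sdiff_subset.trans hQs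
  have hInt : Integrable ((Q \ P s).indicator (fun _ => (1:ℝ))) :=
    (integrable_indicator_iff hRm).2 (integrableOn_const (vol_ne_top hRs))
  have hgc : Continuous g := intervalIntegral.continuous_primitive
    (fun a b => hInt.intervalIntegrable) 0
  have hgv : ∀ c, 0 ≤ c → g c = volume.real ((Q \ P s) ∩ Ioc 0 c) := by
    intro c hc
    rw [hg]
    simp only
    rw [intervalIntegral.integral_of_le hc, integral_indicator hRm,
      Measure.restrict_restrict hRm]
    simp
  have hPreal : volume.real (P s) ≤ y := by
    have := ENNReal.toReal_mono (by simp) h1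
    rwa [ENNReal.toReal_ofReal hy.1.le] at this
  have hQreal : y ≤ volume.real Q := by
    have := ENNReal.toReal_mono (vol_ne_top hQs) h2
    rwa [ENNReal.toReal_ofReal hy.1.le] at this
  have hgℓ : g ℓ = volume.real Q - volume.real (P s) := by
    rw [hgv ℓ hℓ.le, inter_eq_left.2 (hRs.trans Ioo_subset_Ioc_self),
      measureReal_sdiff hPQ (hPm s) (vol_ne_top hQs)]
  obtain ⟨c, hc, hc2⟩ : y - volume.real (P s) ∈ g '' Icc 0 ℓ := by
    apply intermediate_value_Icc hℓ.le hgc.continuousOn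
    constructor
    · simp [hg, hPreal]
    · rw [hgℓ]; linarith
  rw [hgv c hc.1] at hc2
  refine ⟨s, P s ∪ ((Q \ P s) ∩ Ioc 0 c), ?_, ?_, ?_, ?_, ?_⟩
  · exact union_subset (hPs s) (inter_subset_left.trans hRs)
  · exact (hPm s).union (hRm.inter measurableSet_Ioc)
  · have hd : Disjoint (P s) ((Q \ P s) ∩ Ioc 0 c) :=
      disjoint_sdiff_right.mono_right inter_subset_left
    have hsub : P s ∪ ((Q \ P s) ∩ Ioc 0 c) ⊆ Ioo 0 ℓ :=
      union_subset (hPs s) (inter_subset_left.trans hRs)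
    rw [← ENNReal.ofReal_toReal (vol_ne_top hsub)]
    congr 1
    change volume.real _ = y
    rw [measureReal_union hd (hRm.inter measurableSet_Ioc) (vol_ne_top (hPs s))
      (vol_ne_top (inter_subset_left.trans hRs)), hc2]
    ring
  · rintro t (ht | ht)
    · exact ht.2.le
    · exact hQge t ht.1.1
  · intro t ht htn
    by_contra hcon
    push Not at hcon
    exact htn (Or.inl ⟨ht, hcon⟩)

/-- second derivative vanishes a.e. on level sets -/
lemma deriv_zero_level {S : Set ℝ} {v : ℝ → ℝ} {s : ℝ} {v' : ℝ → ℝ}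
    (hv : ∀ t ∈ S, HasDerivAt v (v' t) t) (hs : ∀ t ∈ S, v t = s) :
    ∃ C : Set ℝ, C.Countable ∧ ∀ t ∈ S \ C, v' t = 0 := by
  refine ⟨_, countable_setOfPred_isolated_right_within (s := S), ?_⟩
  rintro t ⟨ht, htn⟩
  have hne : (nhdsWithin t (S ∩ Ioi t)).NeBot := ⟨fun h => htn ⟨ht, h⟩⟩
  have hsl := (hasDerivAt_iff_tendsto_slope.1 (hv t ht)).mono_left
    (nhdsWithin_mono t (fun z (hz : z ∈ S ∩ Ioi t) => ne_of_gt hz.2))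
  have h0 : Filter.Tendsto (slope v t) (nhdsWithin t (S ∩ Ioi t)) (nhds 0) := by
    apply tendsto_const_nhds.congr'
    filter_upwards [self_mem_nhdsWithin] with z hz
    simp [slope_def_field, hs z hz.1, hs t ht]
  exact tendsto_nhds_unique hsl h0

lemma deriv2_zero_level {ℓ : ℝ} {v v' v'' : ℝ → ℝ} (s : ℝ)
    (hv : ∀ t ∈ Icc 0 ℓ, HasDerivAt v (v' t) t)
    (hv' : ∀ t ∈ Icc 0 ℓ, HasDerivAt v' (v'' t) t) :
    ∀ᵐ t, t ∈ Ioo 0 ℓ → v t = s → v'' t = 0 := by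
  set S : Set ℝ := {t | t ∈ Ioo 0 ℓ ∧ v t = s}
  obtain ⟨C, hC, h1⟩ := deriv_zero_level (S := S) (v := v) (s := s) (v' := v')
    (fun t ht => hv t (Ioo_subset_Icc_self ht.1)) (fun t ht => ht.2)
  obtain ⟨C', hC', h2⟩ := deriv_zero_level (S := S \ C) (v := v') (s := 0) (v' := v'')
    (fun t ht => hv' t (Ioo_subset_Icc_self ht.1.1)) h1
  filter_upwards [hC.ae_notMem volume, hC'.ae_notMem volume] with t a b c d
  exact h2 t ⟨⟨⟨c, d⟩, a⟩, b⟩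


lemma exists_rho {a b ε : ℝ} (hε : 0 < ε) (hab : ε < b - a) : ∃ ρ : ℝ → ℝ, Continuous ρ ∧
    (∀ r, 0 ≤ ρ r) ∧ (∀ r, ρ r ≤ 1) ∧ (∀ r, r ≤ a → ρ r = 0) ∧ (∀ r, b ≤ r → ρ r = 0) ∧
    b - a - ε ≤ ∫ r in a..b, ρ r := by
  set η := ε / 2 with hη
  have hη0 : 0 < η := by positivity
  set ρ : ℝ → ℝ := fun r => max 0 (min 1 (min ((r - a) / η) ((b - r) / η))) with hρ
  have hcont : Continuous ρ := by fun_prop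
  have h0 : ∀ r, 0 ≤ ρ r := fun r => le_max_left _ _
  refine ⟨ρ, hcont, h0, fun r => max_le zero_le_one (min_le_left _ _), ?_, ?_, ?_⟩
  · intro r hr
    apply max_eq_left
    refine (min_le_right _ _).trans ((min_le_left _ _).trans ?_)
    exact div_nonpos_of_nonpos_of_nonneg (by linarith) hη0.le
  · intro r hr
    apply max_eq_left
    refine (min_le_right _ _).trans ((min_le_right _ _).trans ?_)
    exact div_nonpos_of_nonpos_of_nonneg (by linarith) hη0.le
  · have h1 : ∫ r in (a+η)..(b-η), (1:ℝ) ≤ ∫ r in (a+η)..(b-η), ρ r := by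
      apply intervalIntegral.integral_mono_on (by linarith) (by simp)
        (hcont.intervalIntegrable _ _)
      intro r hr
      apply le_max_of_le_right
      refine le_min le_rfl (le_min ?_ ?_)
      · rw [le_div_iff₀ hη0]; linarith [hr.1]
      · rw [le_div_iff₀ hη0]; linarith [hr.2]
    have h2 : ∫ r in (a+η)..(b-η), ρ r ≤ ∫ r in a..b, ρ r :=
      intervalIntegral.integral_mono_interval (by linarith) (by linarith) (by linarith)
        (Filter.Eventually.of_forall h0) (hcont.intervalIntegrable _ _)
    simp only [intervalIntegral.integral_const, smul_eq_mul, mul_one] at h1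
    linarith

lemma energy {ℓ C s σ₁ σ₂ m : ℝ} {v v' v'' : ℝ → ℝ} (hℓ : 0 < ℓ)
    (hv : ∀ t ∈ Icc 0 ℓ, HasDerivAt v (v' t) t)
    (hv' : ∀ t ∈ Icc 0 ℓ, HasDerivAt v' (v'' t) t)
    (hc : ContinuousOn v'' (Icc 0 ℓ)) (hC : ∀ t ∈ Icc 0 ℓ, |v'' t| ≤ C)
    (h0 : v' 0 = 0) (h1 : v' ℓ = 0) {E : Set ℝ} (hEs : E ⊆ Ioo 0 ℓ) (hEm : MeasurableSet E)
    (hge : ∀ t ∈ E, s ≤ v t) (hle : ∀ t ∈ Ioo 0 ℓ, t ∉ E → v t ≤ s)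
    (hs2 : σ₂ ≤ s) (hs1 : s ≤ σ₁) (hσ : σ₂ < σ₁)
    (hm : volume.real (Ioo 0 ℓ ∩ v ⁻¹' (Ioo σ₂ σ₁)) ≤ m)
    {ρ : ℝ → ℝ} (hρ : Continuous ρ) (hρ0 : ∀ r, 0 ≤ ρ r) (hρ2 : ∀ r, r ≤ σ₂ → ρ r = 0)
    (hρ1 : ∀ r, σ₁ ≤ r → ρ r = 0) :
    ∫ t in (0:ℝ)..ℓ, ρ (v t) * v' t ^ 2 ≤ (∫ r in σ₂..σ₁, ρ r) * (-(∫ t in E, v'' t) + C * m) := by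
  set P := ∫ r in σ₂..σ₁, ρ r with hP
  set θ : ℝ → ℝ := fun r => ∫ x in σ₂..r, ρ x with hθ
  have hρi : ∀ a b, IntervalIntegrable ρ volume a b := fun a b => hρ.intervalIntegrable a b
  have hθd : ∀ r, HasDerivAt θ (ρ r) r := fun r => (hρ.integral_hasStrictDerivAt σ₂ r).hasDerivAt
  have hθmono : Monotone θ := monotone_of_hasDerivAt_nonneg hθd hρ0
  have hθ2 : ∀ r, r ≤ σ₂ → θ r = 0 := by
    intro r hr
    rw [hθ]
    simp only
    rw [intervalIntegral.integral_symm, neg_eq_zero]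
    apply intervalIntegral.integral_zero_ae
    refine Filter.Eventually.of_forall fun x hx => ?_
    rw [uIoc_of_le hr] at hx
    exact hρ2 x hx.2
  have hθ1 : ∀ r, σ₁ ≤ r → θ r = P := by
    intro r hr
    have : θ r = P + ∫ x in σ₁..r, ρ x :=
      (intervalIntegral.integral_add_adjacent_intervals (hρi _ _) (hρi _ _)).symm
    rw [this, add_eq_left]
    apply intervalIntegral.integral_zero_ae
    refine Filter.Eventually.of_forall fun x hx => ?_
    rw [uIoc_of_le hr] at hx
    exact hρ1 x hx.1.le
  have hθ0 : ∀ r, 0 ≤ θ r := by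
    intro r
    rcases le_total r σ₂ with h | h
    · rw [hθ2 r h]
    · rw [← hθ2 σ₂ le_rfl]; exact hθmono h
  have hθP : ∀ r, θ r ≤ P := by
    intro r
    rcases le_total r σ₁ with h | h
    · rw [← hθ1 σ₁ le_rfl]; exact hθmono h
    · rw [hθ1 r h]
  have hP0 : 0 ≤ P := (hθ0 0).trans (hθP 0)
  have hC0 : 0 ≤ C := (abs_nonneg _).trans (hC 0 ⟨le_rfl, hℓ.le⟩)
  have hvc : ContinuousOn v (Icc 0 ℓ) := fun t ht => (hv t ht).continuousAt.continuousWithinAt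
  have hvc' : ContinuousOn v' (Icc 0 ℓ) := fun t ht => (hv' t ht).continuousAt.continuousWithinAt
  have hθc : Continuous θ := continuous_iff_continuousAt.2 fun r => (hθd r).continuousAt
  have hc1 : ContinuousOn (fun t => ρ (v t) * v' t ^ 2) (Icc 0 ℓ) :=
    (hρ.comp_continuousOn hvc).mul (hvc'.pow 2)
  have hc2 : ContinuousOn (fun t => θ (v t) * v'' t) (Icc 0 ℓ) :=
    (hθc.comp_continuousOn hvc).mul hc
  have hi1 : IntervalIntegrable (fun t => ρ (v t) * v' t ^ 2) volume 0 ℓ :=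
    ContinuousOn.intervalIntegrable (by rwa [uIcc_of_le hℓ.le])
  have hi2 : IntervalIntegrable (fun t => θ (v t) * v'' t) volume 0 ℓ :=
    ContinuousOn.intervalIntegrable (by rwa [uIcc_of_le hℓ.le])
  have hftc : (∫ t in (0:ℝ)..ℓ, (ρ (v t) * v' t ^ 2 + θ (v t) * v'' t)) = 0 := by
    rw [intervalIntegral.integral_eq_sub_of_hasDerivAt (f := fun t => θ (v t) * v' t)]
    · simp [h0, h1]
    · intro t ht
      rw [uIcc_of_le hℓ.le] at ht
      have hd := ((hθd (v t)).comp t (hv t ht)).mul (hv' t ht)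
      have e : ρ (v t) * v' t ^ 2 + θ (v t) * v'' t =
          ρ (v t) * v' t * v' t + (θ ∘ v) t * v'' t := by
        simp only [Function.comp]; ring
      rw [e]
      exact hd
    · exact hi1.add hi2
  rw [intervalIntegral.integral_add hi1 hi2] at hftc
  have hftc' : ∫ t in (0:ℝ)..ℓ, ρ (v t) * v' t ^ 2 = ∫ t in Ioo 0 ℓ, -(θ (v t) * v'' t) := by
    rw [integral_neg, ← integral_Ioc_eq_integral_Ioo, ← intervalIntegral.integral_of_le hℓ.le]
    linarith
  rw [hftc']
  set N : Set ℝ := Ioo 0 ℓ ∩ v ⁻¹' (Ioo σ₂ σ₁) with hN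
  have hNm : MeasurableSet N := ((hvc.mono Ioo_subset_Icc_self).isOpen_inter_preimage isOpen_Ioo
    isOpen_Ioo).measurableSet
  have hNs : N ⊆ Ioo 0 ℓ := inter_subset_left
  have hgi1 : IntegrableOn (E.indicator (fun t => -(P * v'' t))) (Ioo 0 ℓ) :=
    ((integrableOn_sub (hc.const_mul P) subset_rfl).neg).indicator hEm
  have hgi2 : IntegrableOn (N.indicator (fun _ => P * C)) (Ioo 0 ℓ) :=
    IntegrableOn.indicator (integrableOn_const (by simp)) hNm
  have hmain : ∫ t in Ioo 0 ℓ, -(θ (v t) * v'' t) ≤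
      ∫ t in Ioo 0 ℓ, (E.indicator (fun t => -(P * v'' t)) t + N.indicator (fun _ => P * C) t) := by
    apply integral_mono_ae
    · exact (integrableOn_sub hc2 subset_rfl).neg
    · exact hgi1.add hgi2
    · filter_upwards [ae_restrict_of_ae (deriv2_zero_level σ₁ hv hv'),
        ae_restrict_of_ae (deriv2_zero_level σ₂ hv hv'), ae_restrict_mem measurableSet_Ioo]
        with t ha hb ht
      have hab := abs_le.1 (hC t (Ioo_subset_Icc_self ht))
      have hθa := hθ0 (v t)
      have hθb := hθP (v t)
      rcases lt_trichotomy (v t) σ₂ with h | h | h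
      · have hnE : t ∉ E := fun hE => by linarith [hge t hE]
        have : t ∉ N := fun hN => by linarith [hN.2.1]
        simp [hnE, this, hθ2 _ h.le]
      · have : t ∉ N := fun hN => by linarith [hN.2.1]
        by_cases hE : t ∈ E <;> simp [hb ht h, this, hE]
      · rcases lt_trichotomy (v t) σ₁ with h' | h' | h'
        · have : t ∈ N := ⟨ht, h, h'⟩
          by_cases hE : t ∈ E <;> simp [this, hE] <;> nlinarith
        · have : t ∉ N := fun hN => by linarith [hN.2.2]
          by_cases hE : t ∈ E <;> simp [ha ht h', this, hE]
        · have hE : t ∈ E := by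
            by_contra hE
            linarith [hle t ht hE]
          have : t ∉ N := fun hN => by linarith [hN.2.2]
          simp [hE, this, hθ1 _ h'.le]
  refine hmain.trans ?_
  rw [integral_add hgi1 hgi2, integral_indicator hEm, integral_indicator hNm,
    Measure.restrict_restrict hEm, Measure.restrict_restrict hNm, inter_eq_left.2 hEs,
    inter_eq_left.2 hNs, integral_neg, integral_const_mul, setIntegral_const, smul_eq_mul]
  have := mul_le_mul_of_nonneg_right hm (mul_nonneg hP0 hC0)
  linarith

lemma gap {ℓ C s σ₁ σ₂ m : ℝ} {v v' v'' : ℝ → ℝ} (hℓ : 0 < ℓ)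
    (hv : ∀ t ∈ Icc 0 ℓ, HasDerivAt v (v' t) t)
    (hv' : ∀ t ∈ Icc 0 ℓ, HasDerivAt v' (v'' t) t)
    (hc : ContinuousOn v'' (Icc 0 ℓ)) (hC : ∀ t ∈ Icc 0 ℓ, |v'' t| ≤ C)
    (h0 : v' 0 = 0) (h1 : v' ℓ = 0) {E : Set ℝ} (hEs : E ⊆ Ioo 0 ℓ) (hEm : MeasurableSet E)
    (hge : ∀ t ∈ E, s ≤ v t) (hle : ∀ t ∈ Ioo 0 ℓ, t ∉ E → v t ≤ s)
    (hs2 : σ₂ ≤ s) (hs1 : s ≤ σ₁) (hσ : σ₂ < σ₁) (hm0 : 0 < m)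
    (hm : volume.real (Ioo 0 ℓ ∩ v ⁻¹' (Ioo σ₂ σ₁)) ≤ m)
    {a b : ℝ} (ha : a ∈ Icc 0 ℓ) (hb : b ∈ Icc 0 ℓ) (hva : σ₁ ≤ v a) (hvb : v b ≤ σ₂) :
    σ₁ - σ₂ ≤ m * (-(∫ t in E, v'' t) + C * m) := by
  apply le_of_forall_pos_lt_add
  intro ε₀ hε₀
  set ε := min (ε₀ / 2) ((σ₁ - σ₂) / 2) with hε
  have hεpos : 0 < ε := lt_min (by linarith) (by linarith)
  have hε1 : ε < ε₀ := (min_le_left _ _).trans_lt (by linarith)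
  have hε2 : ε < σ₁ - σ₂ := (min_le_right _ _).trans_lt (by linarith)
  obtain ⟨ρ, hρ, hρ0, hρle, hρ2, hρ1, hρP⟩ := exists_rho hεpos hε2
  have hen := energy hℓ hv hv' hc hC h0 h1 hEs hEm hge hle hs2 hs1 hσ hm hρ hρ0 hρ2 hρ1
  set P := ∫ r in σ₂..σ₁, ρ r with hP
  set K := -(∫ t in E, v'' t) + C * m with hK
  have hPpos : 0 < P := by linarith
  have hvc : ContinuousOn v (Icc 0 ℓ) := fun t ht => (hv t ht).continuousAt.continuousWithinAt
  have hvc' : ContinuousOn v' (Icc 0 ℓ) := fun t ht => (hv' t ht).continuousAt.continuousWithinAt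
  have hρi : ∀ a b, IntervalIntegrable ρ volume a b := fun a b => hρ.intervalIntegrable a b
  have hρv : ContinuousOn (fun t => ρ (v t)) (Icc 0 ℓ) := hρ.comp_continuousOn hvc
  -- bound on the gap
  have hsub : uIcc b a ⊆ Icc 0 ℓ := by
    intro t ht
    exact ⟨(le_min hb.1 ha.1).trans ht.1, ht.2.trans (max_le hb.2 ha.2)⟩
  have hP1 : P ≤ ∫ t in b..a, ρ (v t) * v' t := by
    have e1 : ∫ t in b..a, ρ (v t) * v' t = ∫ r in v b..v a, ρ r :=
      intervalIntegral.integral_comp_mul_deriv (fun t ht => hv t (hsub ht)) (hvc'.mono hsub) hρ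
    rw [e1]
    exact intervalIntegral.integral_mono_interval hvb hσ.le hva
      (Filter.Eventually.of_forall hρ0) (hρi _ _)
  have hP2 : ∫ t in b..a, ρ (v t) * v' t ≤ ∫ t in Ioo 0 ℓ, ρ (v t) * |v' t| := by
    have hcabs : ContinuousOn (fun t => ρ (v t) * |v' t|) (Icc 0 ℓ) := hρv.mul hvc'.abs
    refine (le_abs_self _).trans ?_
    rw [← Real.norm_eq_abs]
    refine (intervalIntegral.norm_integral_le_integral_norm_uIoc).trans ?_
    have e2 : ∀ t, ‖ρ (v t) * v' t‖ = ρ (v t) * |v' t| := fun t => by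
      rw [norm_mul, Real.norm_eq_abs, Real.norm_eq_abs, abs_of_nonneg (hρ0 _)]
    simp_rw [e2]
    rw [← integral_Icc_eq_integral_Ioo]
    apply setIntegral_mono_set hcabs.integrableOn_Icc
    · exact Filter.Eventually.of_forall fun t => mul_nonneg (hρ0 _) (abs_nonneg _)
    · exact (uIoc_subset_uIcc.trans hsub).eventuallyLE
  have hInt : ∀ f : ℝ → ℝ, ContinuousOn f (Icc 0 ℓ) → IntegrableOn f (Ioo 0 ℓ) :=
    fun f hf => integrableOn_sub hf subset_rfl
  have hρm : ∫ t in Ioo 0 ℓ, ρ (v t) ≤ m := by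
    refine le_trans ?_ hm
    set N : Set ℝ := Ioo 0 ℓ ∩ v ⁻¹' (Ioo σ₂ σ₁) with hN
    have hNm : MeasurableSet N := ((hvc.mono Ioo_subset_Icc_self).isOpen_inter_preimage isOpen_Ioo
      isOpen_Ioo).measurableSet
    have hNs : N ⊆ Ioo 0 ℓ := inter_subset_left
    have : ∫ t in Ioo 0 ℓ, N.indicator (fun _ => (1:ℝ)) t = volume.real N := by
      rw [integral_indicator hNm, Measure.restrict_restrict hNm, inter_eq_left.2 hNs]
      simp
    rw [← this]
    apply setIntegral_mono_on (hInt _ hρv)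
      (IntegrableOn.indicator (integrableOn_const (by simp)) hNm) measurableSet_Ioo
    intro t ht
    by_cases hN' : t ∈ N
    · simp [hN', hρle]
    · have : ρ (v t) = 0 := by
        by_cases h : v t ≤ σ₂
        · exact hρ2 _ h
        · exact hρ1 _ (by by_contra h'; exact hN' ⟨ht, not_le.1 h, not_le.1 h'⟩)
      simp [hN', this]
  have hAG : ∀ c : ℝ, 2 * c * (∫ t in Ioo 0 ℓ, ρ (v t) * |v' t|) ≤
      c ^ 2 * (∫ t in Ioo 0 ℓ, ρ (v t)) + ∫ t in Ioo 0 ℓ, ρ (v t) * v' t ^ 2 := by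
    intro c
    rw [← integral_const_mul, ← integral_const_mul, ← integral_add]
    · apply integral_mono
      · exact (hInt _ (hρv.mul hvc'.abs)).const_mul _
      · exact ((hInt _ hρv).const_mul _).add (hInt _ (hρv.mul (hvc'.pow 2)))
      · intro t
        have : 0 ≤ ρ (v t) * (c - |v' t|) ^ 2 := mul_nonneg (hρ0 _) (sq_nonneg _)
        have h2 := sq_abs (v' t)
        simp only
        rw [← h2]
        linarith
    · exact (hInt _ hρv).const_mul _
    · exact hInt _ (hρv.mul (hvc'.pow 2))
  rw [intervalIntegral.integral_of_le hℓ.le, integral_Ioc_eq_integral_Ioo] at hen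
  have h3 := hAG (P / m)
  have hPm : 0 < P / m := div_pos hPpos hm0
  have h4 : 2 * (P / m) * P ≤ (P / m) ^ 2 * m + P * K := by
    have a1 := mul_le_mul_of_nonneg_left (hP1.trans hP2) (by positivity : 0 ≤ 2 * (P / m))
    have a2 := mul_le_mul_of_nonneg_left hρm (by positivity : 0 ≤ (P / m) ^ 2)
    linarith
  have h5 : P / m ≤ K := by
    have : (P / m) ^ 2 * m = (P / m) * P := by field_simp
    rw [this] at h4
    have : P * (P / m) ≤ P * K := by linarith
    exact le_of_mul_le_mul_left this hPpos
  rw [div_le_iff₀ hm0] at h5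
  linarith

lemma key_ineq {ℓ C : ℝ} {v v' v'' : ℝ → ℝ} (hℓ : 0 < ℓ)
    (hv : ∀ t ∈ Icc 0 ℓ, HasDerivAt v (v' t) t)
    (hv' : ∀ t ∈ Icc 0 ℓ, HasDerivAt v' (v'' t) t)
    (hc : ContinuousOn v'' (Icc 0 ℓ)) (hC : ∀ t ∈ Icc 0 ℓ, |v'' t| ≤ C)
    (h0 : v' 0 = 0) (h1 : v' ℓ = 0) {y y₁ y₂ s s₁ s₂ : ℝ} {E E₁ E₂ : Set ℝ}
    (hE : TopSet ℓ v y s E) (hE₁ : TopSet ℓ v y₁ s₁ E₁) (hE₂ : TopSet ℓ v y₂ s₂ E₂)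
    (hy1 : 0 < y₁) (hy2 : y₂ < ℓ) (hy : y₁ < y₂) (hs1 : s ≤ s₁) (hs2 : s₂ ≤ s) :
    s₁ - s₂ ≤ (y₂ - y₁) * (-(∫ t in E, v'' t) + C * (y₂ - y₁)) := by
  have hvc : ContinuousOn v (Icc 0 ℓ) := fun t ht => (hv t ht).continuousAt.continuousWithinAt
  have hm0 : 0 < y₂ - y₁ := by linarith
  rcases (hs2.trans hs1).eq_or_lt with heq | hlt
  · -- equal levels
    have hss : s₁ = s := by linarith
    suffices hK : 0 ≤ -(∫ t in E, v'' t) + C * (y₂ - y₁) by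
      have := mul_nonneg hm0.le hK
      linarith
    obtain ⟨q, hq1, hq2, hq3⟩ := exists_seq_strictMono_tendsto s
    have hNm : ∀ n, MeasurableSet (Ioo 0 ℓ ∩ v ⁻¹' (Ioo (q n) s)) := fun n =>
      ((hvc.mono Ioo_subset_Icc_self).isOpen_inter_preimage isOpen_Ioo
        isOpen_Ioo).measurableSet
    have hlim := tendsto_measure_iInter_atTop (μ := volume)
      (s := fun n => Ioo 0 ℓ ∩ v ⁻¹' (Ioo (q n) s)) (fun n => (hNm n).nullMeasurableSet)
      (fun a b hab t ht => ⟨ht.1, (hq1.monotone hab).trans_lt ht.2.1, ht.2.2⟩)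
      ⟨0, vol_ne_top inter_subset_left⟩
    have hemp : (⋂ n, Ioo 0 ℓ ∩ v ⁻¹' (Ioo (q n) s)) = ∅ := by
      ext t
      simp only [mem_iInter, mem_empty_iff_false, iff_false]
      intro h
      have : s ≤ v t := le_of_tendsto' hq3 fun n => (h n).2.1.le
      linarith [(h 0).2.2]
    rw [hemp, measure_empty] at hlim
    obtain ⟨n, hn⟩ := (hlim.eventually (gt_mem_nhds
      (ENNReal.ofReal_pos.2 hm0))).exists
    have hn' : volume.real (Ioo 0 ℓ ∩ v ⁻¹' (Ioo (q n) s)) ≤ y₂ - y₁ := by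
      have := ENNReal.toReal_mono (by simp) hn.le
      rwa [ENNReal.toReal_ofReal hm0.le] at this
    have hqs := hq2 n
    obtain ⟨ρ, hρ, hρ0, hρle, hρ2, hρ1, hρP⟩ :=
      exists_rho (a := q n) (b := s) (ε := (s - q n) / 2) (by linarith) (by linarith)
    have hen := energy hℓ hv hv' hc hC h0 h1 hE.sub hE.meas hE.ge hE.le hqs.le le_rfl hqs hn'
      hρ hρ0 hρ2 hρ1
    have hpos : 0 ≤ ∫ t in (0:ℝ)..ℓ, ρ (v t) * v' t ^ 2 :=
      intervalIntegral.integral_nonneg hℓ.le fun t _ => mul_nonneg (hρ0 _) (sq_nonneg _)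
    exact nonneg_of_mul_nonneg_right (hpos.trans hen) (by linarith)
  · have hsub12 : E₁ ⊆ E₂ := by
      intro t ht
      by_contra hn
      linarith [hE₁.ge t ht, hE₂.le t (hE₁.sub ht) hn]
    have hNsub : Ioo 0 ℓ ∩ v ⁻¹' (Ioo s₂ s₁) ⊆ E₂ \ E₁ := by
      rintro t ⟨ht, hta, htb⟩
      refine ⟨?_, fun h => by linarith [hE₁.ge t h]⟩
      by_contra hn
      linarith [hE₂.le t ht hn]
    have hm : volume.real (Ioo 0 ℓ ∩ v ⁻¹' (Ioo s₂ s₁)) ≤ y₂ - y₁ := by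
      refine (measureReal_mono hNsub
        (measure_ne_top_of_subset sdiff_subset (vol_ne_top hE₂.sub))).trans ?_
      rw [measureReal_sdiff hsub12 hE₁.meas (vol_ne_top hE₂.sub)]
      simp only [Measure.real, hE₁.vol, hE₂.vol]
      rw [ENNReal.toReal_ofReal hy1.le, ENNReal.toReal_ofReal (by linarith)]
    obtain ⟨a, ha⟩ : E₁.Nonempty := by
      apply nonempty_of_measure_ne_zero (μ := volume)
      rw [hE₁.vol]
      simpa using hy1
    obtain ⟨b, hb, hbn⟩ : (Ioo 0 ℓ \ E₂).Nonempty := by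
      by_contra hn
      rw [not_nonempty_iff_eq_empty, sdiff_eq_empty] at hn
      have := measure_mono (μ := volume) hn
      rw [hE₂.vol, Real.volume_Ioo, ENNReal.ofReal_le_ofReal_iff (by linarith)] at this
      linarith
    exact gap hℓ hv hv' hc hC h0 h1 hE.sub hE.meas hE.ge hE.le hs2 hs1 hlt hm0 hm
      (Ioo_subset_Icc_self (hE₁.sub ha)) (Ioo_subset_Icc_self hb) (hE₁.ge a ha) (hE₂.le b hb hbn)


lemma quad_bound {Φ Φ' : ℝ → ℝ} {h K : ℝ} (hh : 0 ≤ h)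
    (hd : ∀ t ∈ Icc 0 h, HasDerivAt Φ (Φ' t) t) (h0 : Φ 0 = 0)
    (hb : ∀ t ∈ Icc 0 h, Φ' t ≤ 2 * K * t) : Φ h ≤ K * h ^ 2 := by
  have hB : ∀ t : ℝ, HasDerivAt (fun t => K * t ^ 2) (2 * K * t) t := by
    intro t
    have := ((hasDerivAt_pow 2 t).const_mul K)
    have e : 2 * K * t = K * ((2 : ℕ) * t ^ (2 - 1)) := by simp; ring
    rw [e]
    exact this
  refine image_le_of_deriv_right_le_deriv_boundary (f := Φ) (f' := Φ') (a := 0) (b := h)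
    (fun t ht => (hd t ht).continuousAt.continuousWithinAt)
    (fun t ht => (hd t (Ico_subset_Icc_self ht)).hasDerivWithinAt)
    (B := fun t => K * t ^ 2) (B' := fun t => 2 * K * t) (by simp [h0])
    (fun t _ => (hB t).continuousAt.continuousWithinAt) (fun t _ => (hB t).hasDerivWithinAt)
    (fun t ht => hb t (Ico_subset_Icc_self ht)) ⟨hh, le_rfl⟩

lemma vol_real_le {ℓ : ℝ} (hℓ : 0 < ℓ) {A : Set ℝ} (hA : A ⊆ Ioo 0 ℓ) : volume.real A ≤ ℓ := by
  have := measureReal_mono (μ := volume) hA (by simp)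
  simpa [Measure.real, hℓ.le] using this

lemma abs_int_le {ℓ C : ℝ} (hℓ : 0 < ℓ) {g : ℝ → ℝ} (hC : ∀ t ∈ Icc 0 ℓ, |g t| ≤ C)
    {A : Set ℝ} (hA : A ⊆ Ioo 0 ℓ) : |∫ t in A, g t| ≤ C * ℓ := by
  have hC0 : 0 ≤ C := (abs_nonneg _).trans (hC 0 ⟨le_rfl, hℓ.le⟩)
  have h1 := norm_setIntegral_le_of_norm_le_const (μ := volume) (s := A) (f := g) (C := C)
    (lt_top_iff_ne_top.2 (vol_ne_top hA)) (fun t ht => hC t (Ioo_subset_Icc_self (hA ht)))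
  exact h1.trans (mul_le_mul_of_nonneg_left (vol_real_le hℓ hA) hC0)

lemma TopSet.anti {ℓ : ℝ} {v : ℝ → ℝ} {y s : ℝ} {E : Set ℝ} (hE : TopSet ℓ v y s E)
    (hv : ContinuousOn v (Icc 0 ℓ)) (hy : 0 ≤ y) {y' : ℝ} {s' : ℝ} {E' : Set ℝ}
    (hE' : TopSet ℓ v y' s' E') (hyy : y < y') : s' ≤ s := by
  have h1 := hE.star_le hv hy (hy.trans hyy.le) hE'
  have h2 := hE'.star_le hv (hy.trans hyy.le) hy hE
  have : 0 ≤ (s - s') * (y' - y) := by linarith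
  by_contra hc
  push Not at hc
  nlinarith

lemma star_second {ℓ C : ℝ} {v v' v'' : ℝ → ℝ} (hℓ : 0 < ℓ)
    (hv : ∀ t ∈ Icc 0 ℓ, HasDerivAt v (v' t) t)
    (hv' : ∀ t ∈ Icc 0 ℓ, HasDerivAt v' (v'' t) t)
    (hc : ContinuousOn v'' (Icc 0 ℓ)) (hC : ∀ t ∈ Icc 0 ℓ, |v'' t| ≤ C)
    (h0 : v' 0 = 0) (h1 : v' ℓ = 0) {y s h : ℝ} {E : Set ℝ}
    (hE : TopSet ℓ v y s E) (hh : 0 < h) (hy1 : h < y) (hy2 : h < ℓ - y) :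
    h ^ 2 * ((∫ t in E, v'' t) - 2 * C * h) ≤
      star1 ℓ v (y + h) + star1 ℓ v (y - h) - 2 * star1 ℓ v y := by
  have hvc : ContinuousOn v (Icc 0 ℓ) := fun t ht => (hv t ht).continuousAt.continuousWithinAt
  have hC0 : 0 ≤ C := (abs_nonneg _).trans (hC 0 ⟨le_rfl, hℓ.le⟩)
  have hex : ∀ z, ∃ s E, z ∈ Ioo 0 ℓ → TopSet ℓ v z s E := by
    intro z
    by_cases hz : z ∈ Ioo 0 ℓ
    · obtain ⟨s, E, h⟩ := exists_topSet hvc hz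
      exact ⟨s, E, fun _ => h⟩
    · exact ⟨0, ∅, fun h => absurd h hz⟩
  choose w A hA using hex
  have hanti : ∀ a b, a ∈ Ioo 0 ℓ → b ∈ Ioo 0 ℓ → a < b → w b ≤ w a := fun a b ha hb hab =>
    (hA a ha).anti hvc ha.1.le (hA b hb) hab
  have hlip1 : ∀ a b, a ∈ Ioo 0 ℓ → b ∈ Ioo 0 ℓ → a < b → w a - w b ≤ 2 * C * ℓ * (b - a) := by
    intro a b ha hb hab
    have := key_ineq hℓ hv hv' hc hC h0 h1 (hA a ha) (hA a ha) (hA b hb) ha.1 hb.2 hab le_rfl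
      (hanti a b ha hb hab)
    refine this.trans ?_
    rw [mul_comm]
    apply mul_le_mul_of_nonneg_right _ (by linarith)
    have h1 := (abs_le.1 (abs_int_le hℓ hC (hA a ha).sub)).1
    have h2 : C * (b - a) ≤ C * ℓ := mul_le_mul_of_nonneg_left (by linarith [ha.1, hb.2]) hC0
    linarith
  have hlip : ∀ a b, a ∈ Ioo 0 ℓ → b ∈ Ioo 0 ℓ → |w a - w b| ≤ 2 * C * ℓ * |b - a| := by
    intro a b ha hb
    rcases lt_trichotomy a b with hab | hab | hab
    · rw [abs_of_nonneg (by linarith [hanti a b ha hb hab]), abs_of_pos (by linarith)]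
      exact hlip1 a b ha hb hab
    · simp [hab]
    · rw [abs_of_nonpos (by linarith [hanti b a hb ha hab]), abs_of_neg (by linarith)]
      linarith [hlip1 b a hb ha hab]
  have hder : ∀ z ∈ Ioo 0 ℓ, HasDerivAt (star1 ℓ v) (w z) z := by
    intro z hz
    rw [hasDerivAt_iff_isLittleO]
    refine Asymptotics.IsBigO.trans_isLittleO (g := fun x => ‖x - z‖ ^ 2) ?_
      (Asymptotics.isLittleO_pow_sub_sub z one_lt_two)
    apply Asymptotics.IsBigO.of_bound (2 * C * ℓ)
    filter_upwards [isOpen_Ioo.mem_nhds hz] with x hx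
    have a1 := (hA z hz).star_le hvc hz.1.le hx.1.le (hA x hx)
    have a2 := (hA x hx).star_le hvc hx.1.le hz.1.le (hA z hz)
    have a3 := hlip x z hx hz
    rw [smul_eq_mul, Real.norm_eq_abs, Real.norm_eq_abs, Real.norm_eq_abs, abs_pow, abs_abs]
    have a4 : |(w x - w z) * (x - z)| ≤ 2 * C * ℓ * |x - z| ^ 2 := by
      rw [abs_mul, sq, ← mul_assoc]
      apply mul_le_mul_of_nonneg_right _ (abs_nonneg _)
      rwa [abs_sub_comm z x] at a3
    refine le_trans ?_ a4
    have a5 := neg_abs_le ((w x - w z) * (x - z))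
    rw [abs_le]
    constructor
    · nlinarith
    · nlinarith [abs_nonneg ((w x - w z) * (x - z))]
  set K := -(∫ t in E, v'' t) + 2 * C * h with hK
  have hΦ := quad_bound (Φ := fun t => 2 * star1 ℓ v y - star1 ℓ v (y + t) - star1 ℓ v (y - t))
    (Φ' := fun t => w (y - t) - w (y + t)) (h := h) (K := K) hh.le ?_ ?_ ?_
  · change 2 * star1 ℓ v y - star1 ℓ v (y + h) - star1 ℓ v (y - h) ≤ K * h ^ 2 at hΦ
    nlinarith
  · intro t ht
    have d1 := (hder (y + t) ⟨by linarith [ht.1], by linarith [ht.2]⟩).comp_const_add y t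
    have d2 := (hder (y - t) ⟨by linarith [ht.2], by linarith [ht.1]⟩).comp_const_sub y t
    have := (d1.const_sub (2 * star1 ℓ v y)).sub d2
    have e : w (y - t) - w (y + t) = -w (y + t) - -w (y - t) := by ring
    rw [e]
    exact this
  · simp; ring
  · intro t ht
    rcases ht.1.eq_or_lt with h0' | h0'
    · simp [← h0']
    have m1 : y - t ∈ Ioo 0 ℓ := ⟨by linarith [ht.2], by linarith [ht.1]⟩
    have m2 : y + t ∈ Ioo 0 ℓ := ⟨by linarith [ht.1], by linarith [ht.2]⟩
    have := key_ineq hℓ hv hv' hc hC h0 h1 hE (hA _ m1) (hA _ m2) m1.1 m2.2 (by linarith)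
      ((hA _ m1).anti hvc m1.1.le hE (by linarith)) (hE.anti hvc (by linarith) (hA _ m2) (by linarith))
    refine this.trans ?_
    have : y + t - (y - t) = 2 * t := by ring
    rw [this]
    have : C * (2 * t) ≤ 2 * C * h := by nlinarith [ht.2]
    have h2t : 0 ≤ 2 * t := by linarith
    have := mul_le_mul_of_nonneg_left (add_le_add_right this (-(∫ t in E, v'' t))) h2t
    rw [hK]
    linarith

lemma le_star1 {ℓ : ℝ} {v : ℝ → ℝ} (hv : ContinuousOn v (Icc 0 ℓ)) {y : ℝ} (hy : y ∈ Ioo 0 ℓ)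
    {A : Set ℝ} (hA : A ⊆ Ioo 0 ℓ) (hAm : MeasurableSet A) (hAv : volume A = ENNReal.ofReal y) :
    ∫ t in A, v t ≤ star1 ℓ v y := by
  obtain ⟨s, E, hE⟩ := exists_topSet hv hy
  rw [hE.star_eq hv hy.1.le]
  simpa using hE.int_le hv hy.1.le hy.1.le hA hAm hAv

lemma star1_le_add {ℓ : ℝ} {v₁ v₂ : ℝ → ℝ} (hv1 : ContinuousOn v₁ (Icc 0 ℓ))
    (hv2 : ContinuousOn v₂ (Icc 0 ℓ)) {y ε : ℝ} (hy : y ∈ Ioo 0 ℓ) 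
    (h : ∀ t ∈ Icc 0 ℓ, |v₁ t - v₂ t| ≤ ε) : star1 ℓ v₁ y ≤ star1 ℓ v₂ y + ε * ℓ := by
  obtain ⟨s, E, hE⟩ := exists_topSet hv1 hy
  rw [hE.star_eq hv1 hy.1.le]
  have h1 := le_star1 hv2 hy hE.sub hE.meas hE.vol
  have h2 := (abs_le.1 (abs_int_le (hy.1.trans hy.2) h hE.sub)).2
  rw [integral_sub (integrableOn_sub hv1 hE.sub) (integrableOn_sub hv2 hE.sub)] at h2
  linarith

lemma star1_abs_le {ℓ : ℝ} {v : ℝ → ℝ} (hv : ContinuousOn v (Icc 0 ℓ)) {y M : ℝ}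
    (hy : y ∈ Ioo 0 ℓ) (h : ∀ t ∈ Icc 0 ℓ, |v t| ≤ M) : |star1 ℓ v y| ≤ M * ℓ := by
  obtain ⟨s, E, hE⟩ := exists_topSet hv hy
  rw [hE.star_eq hv hy.1.le]
  exact abs_int_le (hy.1.trans hy.2) h hE.sub

lemma star1_lip {ℓ : ℝ} {v : ℝ → ℝ} (hv : ContinuousOn v (Icc 0 ℓ)) {y y' M : ℝ}
    (hy : y ∈ Ioo 0 ℓ) (hy' : y' ∈ Ioo 0 ℓ) (h : ∀ t ∈ Icc 0 ℓ, |v t| ≤ M) :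
    star1 ℓ v y' ≤ star1 ℓ v y + M * |y' - y| := by
  obtain ⟨s, E, hE⟩ := exists_topSet hv hy
  obtain ⟨s', E', hE'⟩ := exists_topSet hv hy'
  refine (hE.star_le hv hy.1.le hy'.1.le hE').trans ?_
  have hs : |s| ≤ M := by
    obtain ⟨a, ha⟩ : E.Nonempty := by
      apply nonempty_of_measure_ne_zero (μ := volume)
      rw [hE.vol]
      simpa using hy.1
    obtain ⟨b, hb, hbn⟩ : (Ioo 0 ℓ \ E).Nonempty := by
      by_contra hn
      rw [not_nonempty_iff_eq_empty, sdiff_eq_empty] at hn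
      have := measure_mono (μ := volume) hn
      rw [hE.vol, Real.volume_Ioo, ENNReal.ofReal_le_ofReal_iff (by linarith [hy.1])] at this
      linarith [hy.2]
    have h1 := (abs_le.1 (h a (Ioo_subset_Icc_self (hE.sub ha)))).2
    have h2 := (abs_le.1 (h b (Ioo_subset_Icc_self hb))).1
    exact abs_le.2 ⟨h2.trans (hE.le b hb hbn), (hE.ge a ha).trans h1⟩
  have := (le_abs_self (s * (y' - y)))
  rw [abs_mul] at this
  have := mul_le_mul_of_nonneg_right hs (abs_nonneg (y' - y))
  linarith


/-- second directional derivative -/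
def d2 {V : Type*} [NormedAddCommGroup V] [NormedSpace ℝ V] (u : V → ℝ) (e p : V) : ℝ :=
  fderiv ℝ (fun q => fderiv ℝ u q e) p e

/-- coordinate directions of the cylinder -/
def cdir {m : ℕ} : Option (Fin m) → Cyl m
  | none => (0, 1)
  | some i => (EuclideanSpace.single i 1, 0)

lemma norm_cdir {m : ℕ} (o : Option (Fin m)) : ‖(cdir o : Cyl m)‖ = 1 := by
  cases o <;> simp [cdir, Prod.norm_def]

lemma cylLap_eq {m : ℕ} (u : Cyl m → ℝ) (p : Cyl m) : cylLap u p = ∑ o, d2 u (cdir o) p := by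
  rw [Fintype.sum_option, cylLap, add_comm]
  rfl

section CalcPart
variable {V : Type*} [NormedAddCommGroup V] [NormedSpace ℝ V]

lemma contDiffOn_dir {u : V → ℝ} {U : Set V} (hU : IsOpen U) (hu : ContDiffOn ℝ 2 u U) (e : V) :
    ContDiffOn ℝ 1 (fun q => fderiv ℝ u q e) U :=
  (hu.fderiv_of_isOpen hU (by norm_num)).clm_apply contDiffOn_const

lemma continuousOn_d2 {u : V → ℝ} {U : Set V} (hU : IsOpen U) (hu : ContDiffOn ℝ 2 u U) (e : V) :
    ContinuousOn (d2 u e) U :=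
  ((contDiffOn_dir hU hu e).continuousOn_fderiv_of_isOpen hU le_rfl).clm_apply continuousOn_const

lemma line1 {u : V → ℝ} {U : Set V} (hU : IsOpen U) (hu : ContDiffOn ℝ 2 u U) {e p : V} {t : ℝ}
    (hp : p + t • e ∈ U) :
    HasDerivAt (fun τ : ℝ => u (p + τ • e)) (fderiv ℝ u (p + t • e) e) t := by
  have h1 := ((hu.differentiableOn (by norm_num)).differentiableAt (hU.mem_nhds hp)).hasFDerivAt
  have h2 : HasDerivAt (fun τ : ℝ => p + τ • e) e t := by
    simpa using ((hasDerivAt_id t).smul_const e).const_add p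
  exact h1.comp_hasDerivAt t h2

lemma line2 {u : V → ℝ} {U : Set V} (hU : IsOpen U) (hu : ContDiffOn ℝ 2 u U) {e p : V} {t : ℝ}
    (hp : p + t • e ∈ U) :
    HasDerivAt (fun τ : ℝ => fderiv ℝ u (p + τ • e) e) (d2 u e (p + t • e)) t := by
  have h1 := (((contDiffOn_dir hU hu e).differentiableOn (by norm_num)).differentiableAt
    (hU.mem_nhds hp)).hasFDerivAt
  have h2 : HasDerivAt (fun τ : ℝ => p + τ • e) e t := by
    simpa using ((hasDerivAt_id t).smul_const e).const_add p
  exact h1.comp_hasDerivAt t h2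

lemma second_diff {u : V → ℝ} {U : Set V} (hU : IsOpen U) (hu : ContDiffOn ℝ 2 u U) {e p : V}
    {h ε : ℝ} (hh : 0 < h) (hp : ∀ t : ℝ, |t| ≤ h → p + t • e ∈ U)
    (hε : ∀ t : ℝ, |t| ≤ h → |d2 u e (p + t • e) - d2 u e p| ≤ ε) :
    |u (p + h • e) + u (p - h • e) - 2 * u p - h ^ 2 * d2 u e p| ≤ ε * h ^ 2 := by
  set c := d2 u e p with hc
  set φ : ℝ → ℝ := fun τ => u (p + τ • e) with hφ
  set φ' : ℝ → ℝ := fun τ => fderiv ℝ u (p + τ • e) e with hφ'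
  have D1 : ∀ t, |t| ≤ h → HasDerivAt φ (φ' t) t := fun t ht => line1 hU hu (hp t ht)
  have D2 : ∀ t, |t| ≤ h → HasDerivAt φ' (d2 u e (p + t • e)) t := fun t ht => line2 hU hu (hp t ht)
  have hmv : ∀ t ∈ Icc 0 h, |φ' t - φ' (-t) - 2 * t * c| ≤ 2 * ε * t := by
    intro t ht
    have habs : ∀ x ∈ Icc (-t) t, |x| ≤ h := fun x hx => (abs_le.2 hx).trans ht.2
    have := (convex_Icc (-t) t).norm_image_sub_le_of_norm_hasDerivWithin_le
      (f := fun τ => φ' τ - τ * c) (f' := fun τ => d2 u e (p + τ • e) - 1 * c) (C := ε)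
      (x := -t) (y := t)
      (fun x hx => ((D2 x (habs x hx)).sub ((hasDerivAt_id x).mul_const c)).hasDerivWithinAt)
      (fun x hx => by simpa using hε x (habs x hx)) ⟨le_rfl, by linarith [ht.1]⟩
      ⟨by linarith [ht.1], le_rfl⟩
    simp only [Real.norm_eq_abs] at this
    rw [abs_of_nonneg (a := t - -t) (by linarith [ht.1])] at this
    have e1 : φ' t - φ' (-t) - 2 * t * c = φ' t - t * c - (φ' (-t) - -t * c) := by ring
    rw [e1]
    linarith
  have hd : ∀ t ∈ Icc 0 h, HasDerivAt (fun t => φ t + φ (-t) - 2 * φ 0 - t ^ 2 * c)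
      (φ' t - φ' (-t) - 2 * t * c) t := by
    intro t ht
    have a1 := D1 t (by rw [abs_of_nonneg ht.1]; exact ht.2)
    have a2 : HasDerivAt (fun t => φ (-t)) (-φ' (-t)) t := by
      have := D1 (-t) (by rw [abs_neg, abs_of_nonneg ht.1]; exact ht.2)
      have h' := this.comp t (hasDerivAt_neg t)
      rw [mul_neg_one] at h'
      exact h'
    have a3 : HasDerivAt (fun t : ℝ => t ^ 2 * c) (2 * t * c) t := by
      simpa using (hasDerivAt_pow 2 t).mul_const c
    exact ((a1.add a2).sub_const (2 * φ 0)).sub a3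
  have h00 : φ 0 + φ (-0) - 2 * φ 0 - 0 ^ 2 * c = 0 := by simp; ring
  have r1 := quad_bound (K := ε) hh.le hd h00 (fun t ht => (abs_le.1 (hmv t ht)).2)
  have r2 := quad_bound (K := ε) hh.le (fun t ht => (hd t ht).neg) (by simp only [Pi.neg_apply]; rw [h00, neg_zero])
    (fun t ht => by linarith [(abs_le.1 (hmv t ht)).1])
  have e0 : φ 0 = u p := by simp [hφ]
  have e1 : φ (-h) = u (p - h • e) := by simp [hφ, sub_eq_add_neg]
  simp only [Pi.neg_apply, e0, e1] at r1 r2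
  rw [abs_le]
  constructor
  · simp only [hφ] at r2; linarith
  · simp only [hφ] at r1; linarith
end CalcPart

lemma slice_cont {m : ℕ} {D : Set (EuclideanSpace ℝ (Fin m))} {ℓ : ℝ} {g : Cyl m → ℝ}
    (hg : ContinuousOn g (closure D ×ˢ Icc 0 ℓ)) {x : EuclideanSpace ℝ (Fin m)}
    (hx : x ∈ closure D) : ContinuousOn (fun t => g (x, t)) (Icc 0 ℓ) :=
  hg.comp (by fun_prop) (fun t ht => ⟨hx, ht⟩)

lemma starFun_bound {m : ℕ} {D : Set (EuclideanSpace ℝ (Fin m))} (hDb : IsBounded D) {ℓ : ℝ}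
    {g : Cyl m → ℝ}
    (hg : ContinuousOn g (closure D ×ˢ Icc 0 ℓ)) :
    ∃ M, ∀ p ∈ D ×ˢ Ioo 0 ℓ, |starFun ℓ g p| ≤ M := by
  have hK : IsCompact (closure D ×ˢ Icc (0:ℝ) ℓ) := hDb.isCompact_closure.prod isCompact_Icc
  obtain ⟨M, hM⟩ := hK.exists_bound_of_continuousOn hg
  refine ⟨M * ℓ, fun p hp => ?_⟩
  exact star1_abs_le (slice_cont hg (subset_closure hp.1)) hp.2
    (fun t ht => hM (p.1, t) ⟨subset_closure hp.1, ht⟩)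

lemma starFun_cont {m : ℕ} {D : Set (EuclideanSpace ℝ (Fin m))} (hDb : IsBounded D) {ℓ : ℝ}
    (hℓ : 0 < ℓ) {g : Cyl m → ℝ}
    (hg : ContinuousOn g (closure D ×ˢ Icc 0 ℓ)) :
    ContinuousOn (starFun ℓ g) (D ×ˢ Ioo 0 ℓ) := by
  have hK : IsCompact (closure D ×ˢ Icc (0:ℝ) ℓ) := hDb.isCompact_closure.prod isCompact_Icc
  obtain ⟨M, hM⟩ := hK.exists_bound_of_continuousOn hg
  have huc := Metric.uniformContinuousOn_iff.1 (hK.uniformContinuousOn_of_continuous hg)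
  rw [Metric.continuousOn_iff]
  intro p hp ε hε
  have hM0 : 0 ≤ M := (norm_nonneg _).trans (hM (p.1, 0) ⟨subset_closure hp.1, le_rfl, hℓ.le⟩)
  obtain ⟨δ, hδ, hδ'⟩ := huc (ε / (4 * ℓ)) (by positivity)
  refine ⟨min δ (ε / (4 * (M + 1))), lt_min hδ (by positivity), ?_⟩
  intro q hq hqp
  have hd1 : dist q.1 p.1 < δ := lt_of_le_of_lt (le_max_left _ _) (hqp.trans_le (min_le_left _ _))
  have hd2 : dist q.2 p.2 < ε / (4 * (M + 1)) :=
    lt_of_le_of_lt (le_max_right _ _) (hqp.trans_le (min_le_right _ _))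
  have hcp := slice_cont hg (subset_closure hp.1)
  have hcq := slice_cont hg (subset_closure hq.1)
  have hclose : ∀ t ∈ Icc 0 ℓ, |g (q.1, t) - g (p.1, t)| ≤ ε / (4 * ℓ) := by
    intro t ht
    have := hδ' (q.1, t) ⟨subset_closure hq.1, ht⟩ (p.1, t) ⟨subset_closure hp.1, ht⟩
      (by simpa [Prod.dist_eq, hδ] using hd1)
    exact this.le
  have hMp : ∀ t ∈ Icc 0 ℓ, |g (p.1, t)| ≤ M := fun t ht => hM (p.1, t) ⟨subset_closure hp.1, ht⟩
  have b1 := star1_le_add hcq hcp hq.2 hclose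
  have b2 := star1_le_add hcp hcq hq.2 (fun t ht => by rw [abs_sub_comm]; exact hclose t ht)
  have b3 := star1_lip hcp hp.2 hq.2 hMp
  have b4 := star1_lip hcp hq.2 hp.2 hMp
  have e1 : ε / (4 * ℓ) * ℓ = ε / 4 := by field_simp
  rw [e1] at b1 b2
  have e2 : M * |q.2 - p.2| ≤ ε / 4 := by
    rw [Real.dist_eq] at hd2
    calc M * |q.2 - p.2| ≤ (M + 1) * (ε / (4 * (M + 1))) :=
          mul_le_mul (by linarith) hd2.le (abs_nonneg _) (by linarith)
      _ = ε / 4 := by field_simp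
  rw [abs_sub_comm] at b4
  rw [Real.dist_eq, abs_lt]
  change -ε < star1 ℓ (fun t => g (q.1, t)) q.2 - star1 ℓ (fun t => g (p.1, t)) p.2 ∧
    star1 ℓ (fun t => g (q.1, t)) q.2 - star1 ℓ (fun t => g (p.1, t)) p.2 < ε
  constructor <;> linarith

lemma pointwise {m : ℕ} {D : Set (EuclideanSpace ℝ (Fin m))} (hDb : IsBounded D) {ℓ : ℝ}
    (hℓ : 0 < ℓ) {u : Cyl m → ℝ} {U : Set (Cyl m)} (hU : IsOpen U)
    (hsub : closure D ×ˢ Icc 0 ℓ ⊆ U) (hu : ContDiffOn ℝ 2 u U)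
    (huy0 : ∀ x ∈ D,
      fderiv ℝ u (x, (0 : ℝ)) ((0 : EuclideanSpace ℝ (Fin m)), (1 : ℝ)) = 0)
    (huyℓ : ∀ x ∈ D,
      fderiv ℝ u (x, ℓ) ((0 : EuclideanSpace ℝ (Fin m)), (1 : ℝ)) = 0)
    {ε : ℝ} (hε : 0 < ε) :
    ∃ δ > 0, ∀ h, 0 < h → h < δ → ∀ p : Cyl m,
      (∀ (o : Option (Fin m)) (t : ℝ), |t| ≤ h → p + t • cdir o ∈ D ×ˢ Ioo 0 ℓ) →
      h ^ 2 * (-starFun ℓ (fun q => -cylLap u q) p - ε) ≤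
        ∑ o : Option (Fin m), (starFun ℓ u (p + h • cdir o) + starFun ℓ u (p - h • cdir o)
          - 2 * starFun ℓ u p) := by
  have hK : IsCompact (closure D ×ˢ Icc (0:ℝ) ℓ) := hDb.isCompact_closure.prod isCompact_Icc
  have hcu : ContinuousOn u (closure D ×ˢ Icc (0:ℝ) ℓ) := hu.continuousOn.mono hsub
  have hcd : ∀ o, ContinuousOn (d2 u (cdir o)) (closure D ×ˢ Icc (0:ℝ) ℓ) := fun o =>
    (continuousOn_d2 hU hu _).mono hsub
  obtain ⟨C, hC⟩ := hK.exists_bound_of_continuousOn (hcd none)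
  have hcpi : ContinuousOn (fun p => fun o : Option (Fin m) => d2 u (cdir o) p)
      (closure D ×ˢ Icc (0:ℝ) ℓ) := continuousOn_pi.2 hcd
  have huc := Metric.uniformContinuousOn_iff.1 (hK.uniformContinuousOn_of_continuous hcpi)
  set ε' := ε / (2 * (m * ℓ + 1)) with hε'
  have hε'0 : 0 < ε' := by positivity
  obtain ⟨δ₁, hδ₁, huc⟩ := huc ε' hε'0
  refine ⟨min δ₁ (ε / (4 * (|C| + 1))), lt_min hδ₁ (by positivity), ?_⟩
  rintro h hh hhδ ⟨x, y⟩ hp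
  have hx : x ∈ D := by have := (hp none 0 (by simpa using hh.le)).1; simpa using this
  have hy : y ∈ Ioo 0 ℓ := by have := (hp none 0 (by simpa using hh.le)).2; simpa using this
  have hy1 : h < y := by
    have := (hp none (-h) (by simp [abs_of_pos hh])).2.1
    simp [cdir] at this; linarith
  have hy2 : h < ℓ - y := by
    have := (hp none h (by simp [abs_of_pos hh])).2.2
    simp [cdir] at this; linarith
  have hxi : ∀ (i : Fin m) (t : ℝ), |t| ≤ h → x + t • EuclideanSpace.single i (1:ℝ) ∈ D := by
    intro i t ht
    have := (hp (some i) t ht).1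
    simpa [cdir] using this
  have hxc := subset_closure hx
  have hvc := slice_cont hcu hxc
  obtain ⟨s, E, hE⟩ := exists_topSet hvc hy
  have hC0 : 0 ≤ C := (norm_nonneg _).trans (hC (x, 0) ⟨hxc, le_rfl, hℓ.le⟩)
  -- y-direction
  have hline : ∀ t : ℝ, ((x, (0:ℝ)) : Cyl m) + t • (cdir none : Cyl m) = (x, t) := by
    intro t; simp [cdir]
  have hyd : h ^ 2 * ((∫ t in E, d2 u (cdir none) (x, t)) - 2 * C * h) ≤
      star1 ℓ (fun t => u (x, t)) (y + h) + star1 ℓ (fun t => u (x, t)) (y - h)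
        - 2 * star1 ℓ (fun t => u (x, t)) y := by
    refine star_second (v' := fun t => fderiv ℝ u (x, t) (cdir none)) hℓ ?_ ?_
      (slice_cont (hcd none) hxc) (fun t ht => hC (x, t) ⟨hxc, ht⟩) (huy0 x hx) (huyℓ x hx) hE
      hh hy1 hy2
    · intro t ht
      have := line1 hU hu (p := (x, 0)) (e := cdir none) (t := t)
        (by rw [hline]; exact hsub ⟨hxc, ht⟩)
      simpa only [hline] using this
    · intro t ht
      have := line2 hU hu (p := (x, 0)) (e := cdir none) (t := t)
        (by rw [hline]; exact hsub ⟨hxc, ht⟩)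
      simpa only [hline] using this
  -- x-directions
  have hxd : ∀ i : Fin m, h ^ 2 * ((∫ t in E, d2 u (cdir (some i)) (x, t)) - ε' * ℓ) ≤
      star1 ℓ (fun t => u (x + h • EuclideanSpace.single i (1:ℝ), t)) y
        + star1 ℓ (fun t => u (x - h • EuclideanSpace.single i (1:ℝ), t)) y
        - 2 * star1 ℓ (fun t => u (x, t)) y := by
    intro i
    have hxp : x + h • EuclideanSpace.single i (1:ℝ) ∈ D := hxi i h (by simp [abs_of_pos hh])
    have hxm : x - h • EuclideanSpace.single i (1:ℝ) ∈ D := by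
      have := hxi i (-h) (by simp [abs_of_pos hh])
      rwa [neg_smul, ← sub_eq_add_neg] at this
    have hcp := slice_cont hcu (subset_closure hxp)
    have hcm := slice_cont hcu (subset_closure hxm)
    have l1 := le_star1 hcp hy hE.sub hE.meas hE.vol
    have l2 := le_star1 hcm hy hE.sub hE.meas hE.vol
    rw [hE.star_eq hvc hy.1.le]
    have hsd : ∀ t ∈ Icc 0 ℓ, |u (x + h • EuclideanSpace.single i (1:ℝ), t)
        + u (x - h • EuclideanSpace.single i (1:ℝ), t) - 2 * u (x, t)
        - h ^ 2 * d2 u (cdir (some i)) (x, t)| ≤ ε' * h ^ 2 := by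
      intro t ht
      have hadd : ∀ τ : ℝ, ((x, t) : Cyl m) + τ • (cdir (some i) : Cyl m) =
          (x + τ • EuclideanSpace.single i (1:ℝ), t) := by intro τ; simp [cdir]
      have hsubb : ∀ τ : ℝ, ((x, t) : Cyl m) - τ • (cdir (some i) : Cyl m) =
          (x - τ • EuclideanSpace.single i (1:ℝ), t) := by intro τ; simp [cdir]
      have hmem : ∀ τ : ℝ, |τ| ≤ h → ((x, t) : Cyl m) + τ • (cdir (some i) : Cyl m) ∈
          closure D ×ˢ Icc (0:ℝ) ℓ := by
        intro τ hτ
        rw [hadd]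
        exact ⟨subset_closure (hxi i τ hτ), ht⟩
      have := second_diff hU hu (e := cdir (some i)) (p := (x, t)) (ε := ε') hh
        (fun τ hτ => hsub (hmem τ hτ)) (fun τ hτ => by
          have h1 := huc _ (hmem τ hτ) (x, t) ⟨hxc, ht⟩ (by
            rw [dist_self_add_left, norm_smul, norm_cdir, mul_one]
            exact hτ.trans_lt (hhδ.trans_le (min_le_left _ _)))
          exact ((dist_le_pi_dist _ _ (some i)).trans_lt h1).le)
      rwa [hadd, hsubb] at this
    have hInt := abs_int_le hℓ hsd hE.sub
    have hi1 := integrableOn_sub hcp hE.sub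
    have hi2 := integrableOn_sub hcm hE.sub
    have hi3 := (integrableOn_sub hvc hE.sub).const_mul 2
    have hi4 := (integrableOn_sub (slice_cont (hcd (some i)) hxc) hE.sub).const_mul (h ^ 2)
    have hi12 : IntegrableOn (fun t => u (x + h • EuclideanSpace.single i (1:ℝ), t)
        + u (x - h • EuclideanSpace.single i (1:ℝ), t)) E := hi1.add hi2
    have hi123 : IntegrableOn (fun t => u (x + h • EuclideanSpace.single i (1:ℝ), t)
        + u (x - h • EuclideanSpace.single i (1:ℝ), t) - 2 * u (x, t)) E := hi12.sub hi3
    rw [integral_sub hi123 hi4, integral_sub hi12 hi3,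
      integral_add hi1 hi2, integral_const_mul, integral_const_mul] at hInt
    have := (abs_le.1 hInt).1
    linarith
  -- the right-hand side
  have hclap : (fun t => -cylLap u (x, t)) = fun t => -∑ o, d2 u (cdir o) (x, t) := by
    funext t; rw [cylLap_eq]
  have hlapc : ContinuousOn (fun t => -cylLap u (x, t)) (Icc 0 ℓ) := by
    rw [hclap]
    exact (continuousOn_finsetSum _ fun o _ => slice_cont (hcd o) hxc).neg
  have hf := le_star1 hlapc hy hE.sub hE.meas hE.vol
  have hfe : ∫ t in E, -cylLap u (x, t) = -∑ o, ∫ t in E, d2 u (cdir o) (x, t) := by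
    rw [hclap, integral_neg, integral_finsetSum]
    exact fun o _ => integrableOn_sub (slice_cont (hcd o) hxc) hE.sub
  rw [hfe, Fintype.sum_option] at hf
  have hsum := Finset.sum_le_sum (s := Finset.univ) fun i _ => hxd i
  rw [Fintype.sum_option]
  have e1 : ∀ i : Fin m, starFun ℓ u ((x, y) + h • cdir (some i)) =
      star1 ℓ (fun t => u (x + h • EuclideanSpace.single i (1:ℝ), t)) y := by
    intro i; simp [cdir, starFun, star1]
  have e2 : ∀ i : Fin m, starFun ℓ u ((x, y) - h • cdir (some i)) =
      star1 ℓ (fun t => u (x - h • EuclideanSpace.single i (1:ℝ), t)) y := by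
    intro i; simp [cdir, starFun, star1]
  have e3 : starFun ℓ u ((x, y) + h • cdir none) = star1 ℓ (fun t => u (x, t)) (y + h) := by
    simp [cdir, starFun, star1]
  have e4 : starFun ℓ u ((x, y) - h • cdir none) = star1 ℓ (fun t => u (x, t)) (y - h) := by
    simp [cdir, starFun, star1]
  have e5 : starFun ℓ u (x, y) = star1 ℓ (fun t => u (x, t)) y := rfl
  have e6 : starFun ℓ (fun q => -cylLap u q) (x, y) = star1 ℓ (fun t => -cylLap u (x, t)) y := rfl
  simp only [e1, e2, e3, e4, e5, e6]
  refine le_trans ?_ (add_le_add hyd hsum)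
  rw [← Finset.mul_sum, ← mul_add]
  apply mul_le_mul_of_nonneg_left _ (by positivity)
  rw [Finset.sum_sub_distrib, Finset.sum_const, Finset.card_univ, Fintype.card_fin, nsmul_eq_mul]
  have b1 : (m:ℝ) * (ε' * ℓ) ≤ ε / 2 := by
    have : (m * ℓ + 1) * ε' = ε / 2 := by rw [hε']; field_simp
    nlinarith
  have b2 : 2 * C * h ≤ ε / 2 := by
    have h3 : h ≤ ε / (4 * (|C| + 1)) := (hhδ.trans_le (min_le_right _ _)).le
    rw [abs_of_nonneg hC0] at h3
    have : 2 * C * h ≤ 2 * (C + 1) * (ε / (4 * (C + 1))) :=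
      mul_le_mul (by linarith) h3 hh.le (by linarith)
    have e : 2 * (C + 1) * (ε / (4 * (C + 1))) = ε / 2 := by
      have : C + 1 ≠ 0 := by linarith
      field_simp; norm_num
    linarith
  linarith


lemma d2_compact {m : ℕ} {G : Cyl m → ℝ} (hGc : HasCompactSupport G) (e : Cyl m) :
    HasCompactSupport (d2 G e) :=
  (hGc.fderiv_apply (𝕜 := ℝ) e).fderiv_apply (𝕜 := ℝ) e

lemma d2_cont {m : ℕ} {G : Cyl m → ℝ} (hG : ContDiff ℝ 2 G) (e : Cyl m) :
    Continuous (d2 G e) := by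
  rw [← continuousOn_univ]
  exact continuousOn_d2 isOpen_univ hG.contDiffOn e

lemma test_second {m : ℕ} {G : Cyl m → ℝ} (hG : ContDiff ℝ 2 G) (hGc : HasCompactSupport G)
    {ε : ℝ} (hε : 0 < ε) :
    ∃ δ > 0, ∀ h, 0 < h → h < δ → ∀ (p : Cyl m) (o : Option (Fin m)),
      |G (p + h • cdir o) + G (p - h • cdir o) - 2 * G p - h ^ 2 * d2 G (cdir o) p| ≤ ε * h ^ 2 := by
  have huc : UniformContinuous (fun p => fun o : Option (Fin m) => d2 G (cdir o) p) :=
    uniformContinuous_pi.2 fun o =>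
      (d2_compact hGc _).uniformContinuous_of_continuous (d2_cont hG _)
  obtain ⟨δ, hδ, hd⟩ := Metric.uniformContinuous_iff.1 huc ε hε
  refine ⟨δ, hδ, fun h hh hhδ p o => ?_⟩
  refine second_diff isOpen_univ hG.contDiffOn hh (fun _ _ => mem_univ _) (fun t ht => ?_)
  have h1 := hd (a := p + t • cdir o) (b := p) (by
    rw [dist_self_add_left, norm_smul, norm_cdir, mul_one]
    exact ht.trans_lt hhδ)
  exact ((dist_le_pi_dist _ _ o).trans_lt h1).le

lemma cyl_inv (m : ℕ) : (volume : Measure (Cyl m)).IsAddRightInvariant := by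
  have : ((volume : Measure (EuclideanSpace ℝ (Fin m))).prod
      (volume : Measure ℝ)).IsAddLeftInvariant := inferInstance
  have h2 : (volume : Measure (Cyl m)).IsAddLeftInvariant := this
  infer_instance

lemma swap_diff {m : ℕ} {F G : Cyl m → ℝ} {M : ℝ} (hF : AEStronglyMeasurable F volume)
    (hM : ∀ p, |F p| ≤ M) (hG : Integrable G volume) (a : Cyl m) :
    Integrable (fun p => F p * (G (p + a) + G (p - a) - 2 * G p)) volume ∧
    Integrable (fun p => (F (p + a) + F (p - a) - 2 * F p) * G p) volume ∧
    ∫ p, F p * (G (p + a) + G (p - a) - 2 * G p) =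
      ∫ p, (F (p + a) + F (p - a) - 2 * F p) * G p := by
  have := cyl_inv m
  have key : ∀ (b : Cyl m), Integrable (fun p => F (p + b) * G p) volume := by
    intro b
    exact hG.bdd_mul (c := M)
      (hF.comp_measurePreserving (measurePreserving_add_right volume b))
      (Filter.Eventually.of_forall fun p => hM _)
  have key2 : ∀ (b : Cyl m), Integrable (fun p => F p * G (p + b)) volume := by
    intro b
    exact (hG.comp_add_right b).bdd_mul (c := M) hF (Filter.Eventually.of_forall fun p => hM _)
  have key3 : ∀ (b : Cyl m), ∫ p, F p * G (p + b) = ∫ p, F (p + -b) * G p := by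
    intro b
    have := integral_add_right_eq_self (μ := (volume : Measure (Cyl m)))
      (fun p => F (p + -b) * G p) b
    simpa using this
  have k0 : Integrable (fun p => F p * G p) volume := by simpa using key 0
  have i1 : Integrable (fun p => F p * G (p + a) + F p * G (p + -a)) volume :=
    (key2 a).add (key2 (-a))
  have i2 : Integrable (fun p => F (p + a) * G p + F (p + -a) * G p) volume :=
    (key a).add (key (-a))
  have e1 : (fun p => F p * (G (p + a) + G (p - a) - 2 * G p)) =
      fun p => (F p * G (p + a) + F p * G (p + -a)) - 2 * (F p * G p) := by
    funext p; rw [sub_eq_add_neg p a]; ring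
  have e2 : (fun p => (F (p + a) + F (p - a) - 2 * F p) * G p) =
      fun p => (F (p + a) * G p + F (p + -a) * G p) - 2 * (F p * G p) := by
    funext p; rw [sub_eq_add_neg p a]; ring
  refine ⟨?_, ?_, ?_⟩
  · rw [e1]; exact i1.sub (k0.const_mul 2)
  · rw [e2]; exact i2.sub (k0.const_mul 2)
  · rw [e1, e2, integral_sub i1 (k0.const_mul 2), integral_sub i2 (k0.const_mul 2),
      integral_add (key2 a) (key2 (-a)), integral_add (key a) (key (-a)), key3, key3, neg_neg]
    ring

lemma room {m : ℕ} {K Ω : Set (Cyl m)} (hK : IsCompact K) (hΩ : IsOpen Ω) (hKΩ : K ⊆ Ω) :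
    ∃ r > 0, ∀ p ∈ K, ∀ (o : Option (Fin m)) (t : ℝ), |t| ≤ r → p + t • cdir o ∈ Ω := by
  obtain ⟨r, hr, hsub⟩ := hK.exists_cthickening_subset_open hΩ hKΩ
  refine ⟨r, hr, fun p hp o t ht => hsub ?_⟩
  refine Metric.mem_cthickening_of_dist_le _ p _ _ hp ?_
  rw [dist_self_add_left, norm_smul, norm_cdir, mul_one]
  exact ht

lemma main_cyl {m : ℕ} (D : Set (EuclideanSpace ℝ (Fin m))) (hD : IsOpen D) (hDb : IsBounded D)
    {ℓ : ℝ} (hℓ : 0 < ℓ) (u : Cyl m → ℝ)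
    (hu : IsC2OnClosure u (D ×ˢ Ioo (0 : ℝ) ℓ))
    (huy0 : ∀ x ∈ D,
      fderiv ℝ u (x, (0 : ℝ)) ((0 : EuclideanSpace ℝ (Fin m)), (1 : ℝ)) = 0)
    (huyℓ : ∀ x ∈ D,
      fderiv ℝ u (x, ℓ) ((0 : EuclideanSpace ℝ (Fin m)), (1 : ℝ)) = 0)
    (G : Cyl m → ℝ) (hG : ContDiff ℝ 2 G) (hG0 : ∀ p, 0 ≤ G p)
    (hGc : HasCompactSupport G) (hGs : tsupport G ⊆ D ×ˢ Ioo (0 : ℝ) ℓ) :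
      -∫ p in D ×ˢ Ioo (0 : ℝ) ℓ, starFun ℓ u p * cylLap G p ≤
        ∫ p in D ×ˢ Ioo (0 : ℝ) ℓ, starFun ℓ (fun q => -cylLap u q) p * G p := by
  obtain ⟨U, hU, hcl, hu⟩ := hu
  rw [closure_prod_eq, closure_Ioo hℓ.ne] at hcl
  set Ω : Set (Cyl m) := D ×ˢ Ioo (0 : ℝ) ℓ with hΩdef
  have hΩ : IsOpen Ω := hD.prod isOpen_Ioo
  have hΩm : MeasurableSet Ω := hΩ.measurableSet
  have hΩb : IsBounded Ω := hDb.prod (Metric.isBounded_Ioo _ _)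
  have hΩf : volume Ω ≠ ⊤ := hΩb.measure_lt_top.ne
  have hcu : ContinuousOn u (closure D ×ˢ Icc (0:ℝ) ℓ) := hu.continuousOn.mono hcl
  have hcf : ContinuousOn (fun q => -cylLap u q) (closure D ×ˢ Icc (0:ℝ) ℓ) := by
    simp only [cylLap_eq]
    exact (continuousOn_finsetSum _ fun o _ => (continuousOn_d2 hU hu _).mono hcl).neg
  obtain ⟨M, hM⟩ := starFun_bound hDb hcu
  obtain ⟨M', hM'⟩ := starFun_bound hDb hcf
  set F : Cyl m → ℝ := Ω.indicator (starFun ℓ u) with hF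
  set f : Cyl m → ℝ := Ω.indicator (starFun ℓ (fun q => -cylLap u q)) with hf
  have hFm : AEStronglyMeasurable F volume :=
    (aestronglyMeasurable_indicator_iff hΩm).2
      ((starFun_cont hDb hℓ hcu).aestronglyMeasurable hΩm)
  have hfm : AEStronglyMeasurable f volume :=
    (aestronglyMeasurable_indicator_iff hΩm).2
      ((starFun_cont hDb hℓ hcf).aestronglyMeasurable hΩm)
  have hFb : ∀ p, |F p| ≤ |M| := by
    intro p
    by_cases hp : p ∈ Ω
    · rw [hF, indicator_of_mem hp]; exact (hM p hp).trans (le_abs_self _)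
    · rw [hF, indicator_of_notMem hp]; simp
  have hfb : ∀ p, |f p| ≤ |M'| := by
    intro p
    by_cases hp : p ∈ Ω
    · rw [hf, indicator_of_mem hp]; exact (hM' p hp).trans (le_abs_self _)
    · rw [hf, indicator_of_notMem hp]; simp
  have hGi : Integrable G volume := hG.continuous.integrable_of_hasCompactSupport hGc
  have hd2i : ∀ o : Option (Fin m), Integrable (d2 G (cdir o)) volume := fun o =>
    (d2_cont hG _).integrable_of_hasCompactSupport (d2_compact hGc _)
  have hLi : Integrable (fun p => cylLap G p) volume := by
    simp only [cylLap_eq]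
    exact integrable_finsetSum _ fun o _ => hd2i o
  have hFL : Integrable (fun p => F p * cylLap G p) volume :=
    hLi.bdd_mul (c := |M|) hFm (Filter.Eventually.of_forall fun p => hFb p)
  have hfG : Integrable (fun p => f p * G p) volume :=
    hGi.bdd_mul (c := |M'|) hfm (Filter.Eventually.of_forall fun p => hfb p)
  have r1 : ∫ p in Ω, starFun ℓ u p * cylLap G p = ∫ p, F p * cylLap G p := by
    rw [← integral_indicator hΩm]
    congr 1; funext p
    rw [hF]; exact indicator_mul_left _ _ _
  have r2 : ∫ p in Ω, starFun ℓ (fun q => -cylLap u q) p * G p = ∫ p, f p * G p := by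
    rw [← integral_indicator hΩm]
    congr 1; funext p
    rw [hf]; exact indicator_mul_left _ _ _
  rw [r1, r2]
  set N : ℝ := (Fintype.card (Option (Fin m)) : ℝ) with hN
  set c : ℝ := (∫ p, G p) + |M| * N * volume.real Ω with hc
  have hc0 : 0 ≤ c := by
    have : 0 ≤ ∫ p, G p := integral_nonneg hG0
    positivity
  have main : ∀ ε > 0, -∫ p, F p * cylLap G p ≤ (∫ p, f p * G p) + ε * c := by
    intro ε hε
    obtain ⟨δ₁, hδ₁, H1⟩ := pointwise hDb hℓ hU hcl hu huy0 huyℓ hε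
    obtain ⟨δ₂, hδ₂, H2⟩ := test_second hG hGc hε
    obtain ⟨r, hr, H3⟩ := room hGc hΩ hGs
    obtain ⟨h, hh, hhlt⟩ := exists_between (lt_min hr (lt_min hδ₁ hδ₂))
    have hhr : h < r := hhlt.trans_le (min_le_left _ _)
    have hh1 : h < δ₁ := hhlt.trans_le ((min_le_right _ _).trans (min_le_left _ _))
    have hh2 : h < δ₂ := hhlt.trans_le ((min_le_right _ _).trans (min_le_right _ _))
    have sw := fun o : Option (Fin m) => swap_diff hFm hFb hGi (h • cdir o)
    have eqs : ∫ p, ∑ o : Option (Fin m),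
          F p * (G (p + h • cdir o) + G (p - h • cdir o) - 2 * G p) =
        ∫ p, ∑ o : Option (Fin m), (F (p + h • cdir o) + F (p - h • cdir o) - 2 * F p) * G p := by
      rw [integral_finsetSum _ fun o _ => (sw o).1, integral_finsetSum _ fun o _ => (sw o).2.1]
      exact Finset.sum_congr rfl fun o _ => (sw o).2.2
    have lo : ∫ p, h ^ 2 * (-(f p * G p) - ε * G p) ≤
        ∫ p, ∑ o : Option (Fin m), (F (p + h • cdir o) + F (p - h • cdir o) - 2 * F p) * G p := by
      refine integral_mono ((hfG.neg.sub (hGi.const_mul ε)).const_mul _)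
        (integrable_finsetSum _ fun o _ => (sw o).2.1) fun p => ?_
      by_cases hp : p ∈ tsupport G
      · have hmem : ∀ (o : Option (Fin m)) (t : ℝ), |t| ≤ h → p + t • cdir o ∈ Ω :=
          fun o t ht => H3 p hp o t (ht.trans hhr.le)
        have hpt := H1 h hh hh1 p hmem
        have m1 : ∀ o : Option (Fin m), F (p + h • cdir o) = starFun ℓ u (p + h • cdir o) :=
          fun o => indicator_of_mem (hmem o h (abs_of_pos hh).le) _
        have m2 : ∀ o : Option (Fin m), F (p - h • cdir o) = starFun ℓ u (p - h • cdir o) := by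
          intro o
          refine indicator_of_mem ?_ _
          have := hmem o (-h) (by rw [abs_neg]; exact (abs_of_pos hh).le)
          rwa [neg_smul, ← sub_eq_add_neg] at this
        have m3 : F p = starFun ℓ u p := indicator_of_mem (hGs hp) _
        have m4 : f p = starFun ℓ (fun q => -cylLap u q) p := indicator_of_mem (hGs hp) _
        change h ^ 2 * (-(f p * G p) - ε * G p) ≤
          ∑ o : Option (Fin m), (F (p + h • cdir o) + F (p - h • cdir o) - 2 * F p) * G p
        rw [← Finset.sum_mul]
        simp only [m1, m2, m3, m4]
        have := mul_le_mul_of_nonneg_right hpt (hG0 p)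
        linarith
      · have : G p = 0 := image_eq_zero_of_notMem_tsupport hp
        simp [this]
    have hi : ∫ p, ∑ o : Option (Fin m),
          F p * (G (p + h • cdir o) + G (p - h • cdir o) - 2 * G p) ≤
        ∫ p, (h ^ 2 * (F p * cylLap G p) +
          Ω.indicator (fun _ => |M| * (N * (ε * h ^ 2))) p) := by
      refine integral_mono (integrable_finsetSum _ fun o _ => (sw o).1)
        ((hFL.const_mul _).add ((integrable_indicator_iff hΩm).2
          (integrableOn_const hΩf))) fun p => ?_
      change ∑ o : Option (Fin m), F p * (G (p + h • cdir o) + G (p - h • cdir o) - 2 * G p) ≤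
        h ^ 2 * (F p * cylLap G p) + Ω.indicator (fun _ => |M| * (N * (ε * h ^ 2))) p
      by_cases hp : p ∈ Ω
      · rw [indicator_of_mem hp, ← Finset.mul_sum, cylLap_eq]
        have hs : |∑ o : Option (Fin m), (G (p + h • cdir o) + G (p - h • cdir o) - 2 * G p)
            - h ^ 2 * ∑ o : Option (Fin m), d2 G (cdir o) p| ≤ N * (ε * h ^ 2) := by
          rw [Finset.mul_sum, ← Finset.sum_sub_distrib]
          refine (Finset.abs_sum_le_sum_abs _ _).trans ?_
          refine (Finset.sum_le_sum fun o _ => H2 h hh hh2 p o).trans ?_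
          rw [Finset.sum_const, nsmul_eq_mul, Finset.card_univ]
        have := (le_abs_self _).trans_eq (abs_mul (F p)
          (∑ o : Option (Fin m), (G (p + h • cdir o) + G (p - h • cdir o) - 2 * G p)
            - h ^ 2 * ∑ o : Option (Fin m), d2 G (cdir o) p))
        have h2 := mul_le_mul (hFb p) hs (abs_nonneg _) (abs_nonneg _)
        linarith
      · have : F p = 0 := indicator_of_notMem hp _
        simp [this, hp]
    have hfGn : Integrable (fun p => -(f p * G p)) volume := hfG.neg
    rw [integral_const_mul, integral_sub hfGn (hGi.const_mul ε), integral_neg,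
      integral_const_mul] at lo
    rw [integral_add (hFL.const_mul _) ((integrable_indicator_iff hΩm).2
          (integrableOn_const hΩf)), integral_const_mul, integral_indicator hΩm,
      setIntegral_const, smul_eq_mul] at hi
    rw [eqs] at hi
    have h3 := lo.trans hi
    have hpos : 0 < h ^ 2 := by positivity
    have h4 : h ^ 2 * (-∫ p, F p * cylLap G p) ≤ h ^ 2 * ((∫ p, f p * G p) + ε * c) := by
      rw [hc]; linarith
    exact le_of_mul_le_mul_left h4 hpos
  refine le_of_forall_pos_le_add fun η hη => ?_
  refine (main (η / (c + 1)) (by positivity)).trans ?_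
  have : η / (c + 1) * c ≤ η := by
    rw [div_mul_eq_mul_div, div_le_iff₀ (by positivity)]
    nlinarith
  linarith

/-- **Subharmonicity** for the decreasing rearrangement in the `y`-direction:
if `-Δu = f` and `u_y` vanishes on the top and bottom of the cylinder, then
`-Δ u^★ ≤ f^★` weakly. -/
theorem subharmonicity_cylinder {n : ℕ} (hn : 2 ≤ n)
    (D : Set (EuclideanSpace ℝ (Fin (n - 1)))) (hD : IsOpen D) (hDb : IsBounded D)
    {ℓ : ℝ} (hℓ : 0 < ℓ) (u : Cyl (n - 1) → ℝ)
    (hu : IsC2OnClosure u (D ×ˢ Ioo (0 : ℝ) ℓ))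
    (huy0 : ∀ x ∈ D,
      fderiv ℝ u (x, (0 : ℝ)) ((0 : EuclideanSpace ℝ (Fin (n - 1))), (1 : ℝ)) = 0)
    (huyℓ : ∀ x ∈ D,
      fderiv ℝ u (x, ℓ) ((0 : EuclideanSpace ℝ (Fin (n - 1))), (1 : ℝ)) = 0) :
    ∀ G : Cyl (n - 1) → ℝ, ContDiff ℝ 2 G → (∀ p, 0 ≤ G p) →
      HasCompactSupport G → tsupport G ⊆ D ×ˢ Ioo (0 : ℝ) ℓ →
      -∫ p in D ×ˢ Ioo (0 : ℝ) ℓ, starFun ℓ u p * cylLap G p ≤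
        ∫ p in D ×ˢ Ioo (0 : ℝ) ℓ, starFun ℓ (fun q => -cylLap u q) p * G p := by
  intro G hG hG0 hGc hGs
  exact main_cyl D hD hDb hℓ u hu huy0 huyℓ G hG hG0 hGc hGs
end
end
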